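/- arXiv:1906.04773 — 3 statements merged into one kernel-verified Lean document; each statement's English description precedes it below -/
import Mathlib

section
/- Let B be a topological space and let A, X be spaces over B whose structure maps to B are Hurewicz fibrations. Then every map i : A → X over B that is an h-cofibration is an f-cofibration over B. -/
open unitInterval Topology

/-- A continuous map `p : X → B` is a *Hurewicz fibration* if the map
`C([0,1],X) → X ×_B C([0,1],B)`, `γ ↦ (γ 0, p ∘ γ)`, admits a continuous section, i.e. there
is a continuous path-lifting function. -/
def IsHurewiczFibration {X B : Type*} [TopologicalSpace X] [TopologicalSpace B]
    (p : C(X, B)) : Prop :=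
  ∃ s : C({q : X × C(I, B) // p q.1 = q.2 0}, C(I, X)),
    ∀ q : {q : X × C(I, B) // p q.1 = q.2 0},
      s q 0 = q.1.1 ∧ ∀ t : I, p (s q t) = q.1.2 t

/-- A continuous map `i : X → Y` is an *h-cofibration* if it is a closed embedding and
`(Y × {0}) ∪ (i(X) × [0,1])` is a retract of `Y × [0,1]`. -/
def IsHCofibration {X Y : Type*} [TopologicalSpace X] [TopologicalSpace Y]
    (i : C(X, Y)) : Prop :=
  IsClosedEmbedding (⇑i) ∧
  ∃ r : C(Y × I, Y × I),
    (∀ z : Y × I, (r z).2 = 0 ∨ (r z).1 ∈ Set.range ⇑i) ∧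
    ∀ z : Y × I, (z.2 = 0 ∨ z.1 ∈ Set.range ⇑i) → r z = z

/-- A map `i : X → Y` of spaces over `B` (where `pY : Y → B` is the structure map of `Y`)
is an *f-cofibration over `B`* if it is a closed embedding and `(Y × {0}) ∪ (i(X) × [0,1])`
is a retract of `Y × [0,1]` via a retraction commuting with the projections to `B`. -/
def IsFCofibration {X Y B : Type*} [TopologicalSpace X] [TopologicalSpace Y]
    [TopologicalSpace B] (i : C(X, Y)) (pY : C(Y, B)) : Prop :=
  IsClosedEmbedding (⇑i) ∧
  ∃ r : C(Y × I, Y × I),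
    (∀ z : Y × I, (r z).2 = 0 ∨ (r z).1 ∈ Set.range ⇑i) ∧
    (∀ z : Y × I, (z.2 = 0 ∨ z.1 ∈ Set.range ⇑i) → r z = z) ∧
    ∀ z : Y × I, pY (r z).1 = pY z.1

/-- Hurewicz fibrations have the homotopy lifting property. -/
lemma IsHurewiczFibration.exists_lift {X B Z : Type*} [TopologicalSpace X] [TopologicalSpace B]
    [TopologicalSpace Z] {p : C(X, B)} (hp : IsHurewiczFibration p) (f : C(Z, X))
    (H : C(Z × I, B)) (hf : ∀ z, p (f z) = H (z, 0)) :
    ∃ F : C(Z × I, X), (∀ z, F (z, 0) = f z) ∧ ∀ z t, p (F (z, t)) = H (z, t) := by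
  obtain ⟨s, hs⟩ := hp
  let q : C(Z, {q : X × C(I, B) // p q.1 = q.2 0}) :=
    ⟨fun z => ⟨(f z, H.curry z), hf z⟩, by fun_prop⟩
  exact ⟨(s.comp q).uncurry, fun z => (hs (q z)).1, fun z t => (hs (q z)).2 t⟩

/-- A difference in the unit interval, truncated at zero. -/
noncomputable def truncSub (s t : I) : I := Set.projIcc 0 1 zero_le_one ((s : ℝ) - t)

/-- A sum in the unit interval, truncated at one. -/
noncomputable def truncAdd (s t : I) : I := Set.projIcc 0 1 zero_le_one ((s : ℝ) + t)

@[fun_prop]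
lemma Continuous.truncSub {Z : Type*} [TopologicalSpace Z] {f g : Z → I} (hf : Continuous f)
    (hg : Continuous g) : Continuous fun z => truncSub (f z) (g z) :=
  continuous_projIcc.comp (by fun_prop)

@[fun_prop]
lemma Continuous.truncAdd {Z : Type*} [TopologicalSpace Z] {f g : Z → I} (hf : Continuous f)
    (hg : Continuous g) : Continuous fun z => truncAdd (f z) (g z) :=
  continuous_projIcc.comp (by fun_prop)

lemma truncSub_zero (s : I) : truncSub s 0 = s := by simp [truncSub]

lemma truncSub_eq_zero {s t : I} (h : s ≤ t) : truncSub s t = 0 :=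
  Set.projIcc_of_le_left _ (sub_nonpos.2 h)

lemma truncAdd_zero (s : I) : truncAdd s 0 = s := by simp [truncAdd]

lemma truncAdd_truncSub {s t : I} (h : s ≤ t) : truncAdd s (truncSub t s) = t := by
  have hm : (t : ℝ) - s ∈ Set.Icc (0 : ℝ) 1 :=
    ⟨sub_nonneg.2 h, by linarith [t.2.2, s.2.1]⟩
  simp [truncAdd, truncSub, Set.projIcc_of_mem _ hm]

/-- Two maps that are continuous on closed sets covering the space, and that agree on the
intersection, glue to a continuous map. -/
lemma exists_continuousMap_glue {Z W : Type*} [TopologicalSpace Z] [TopologicalSpace W]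
    {S T : Set Z} (hS : IsClosed S) (hT : IsClosed T) (hST : ∀ z, z ∈ S ∨ z ∈ T) {f g : Z → W}
    (hf : ContinuousOn f S) (hg : ContinuousOn g T) (hfg : ∀ z ∈ S, z ∈ T → f z = g z) :
    ∃ k : C(Z, W), (∀ z ∈ S, k z = f z) ∧ ∀ z ∈ T, k z = g z := by
  classical
  have hkS : ∀ z ∈ S, S.piecewise f g z = f z := fun z hz => Set.piecewise_eq_of_mem _ _ _ hz
  have hkT : ∀ z ∈ T, S.piecewise f g z = g z := fun z hz => by
    by_cases h : z ∈ S
    · rw [hkS z h, hfg z h hz]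
    · exact Set.piecewise_eq_of_notMem _ _ _ h
  have hk : ContinuousOn (S.piecewise f g) (S ∪ T) :=
    (hf.congr hkS).union_of_isClosed (hg.congr hkT) hS hT
  rw [show S ∪ T = Set.univ from Set.eq_univ_of_forall hST, continuousOn_univ] at hk
  exact ⟨⟨_, hk⟩, hkS, hkT⟩

/-- The mapping cylinder `(X × {0}) ∪ (i(A) × [0,1])` of a closed embedding over `B` between
fibrations has the homotopy lifting property over `B`. -/
lemma exists_lift_mappingCylinder {B A X Z : Type*} [TopologicalSpace B] [TopologicalSpace A]
    [TopologicalSpace X] [TopologicalSpace Z] {pA : C(A, B)} {pX : C(X, B)}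
    (hpA : IsHurewiczFibration pA) (hpX : IsHurewiczFibration pX) {i : C(A, X)}
    (hover : ∀ a, pX (i a) = pA a) (hi : IsClosedEmbedding i) (f : C(Z, X × I))
    (hfM : ∀ z, (f z).2 = 0 ∨ (f z).1 ∈ Set.range i) (H : C(Z × I, B))
    (hf : ∀ z, pX (f z).1 = H (z, 0)) :
    ∃ F : C(Z × I, X × I), (∀ w, (F w).2 = 0 ∨ (F w).1 ∈ Set.range i) ∧
      (∀ z, F (z, 0) = f z) ∧ ∀ w, pX (F w).1 = H w := by
  let S : Set Z := {z | (f z).1 ∈ Set.range i}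
  have hS : IsClosed S := hi.isClosed_range.preimage (continuous_fst.comp f.continuous)
  choose a ha using fun z : S => z.2
  have ha_cont : Continuous a := by
    rw [hi.isInducing.continuous_iff, show i ∘ a = fun z : S => (f z).1 from funext ha]
    fun_prop
  -- over `S`, lift the homotopy to `A`
  obtain ⟨α, hα0, hα⟩ := hpA.exists_lift ⟨a, ha_cont⟩
    (H.comp ⟨fun w : S × I => ((w.1 : Z), w.2), by fun_prop⟩)
    (fun z => by simpa [← hover, ha] using hf z)
  classical
  let β : Z × I → X := fun w => if h : w.1 ∈ S then i (α (⟨w.1, h⟩, w.2)) else (f w.1).1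
  have hβS : ∀ (z : Z) (h : z ∈ S) (t : I), β (z, t) = i (α (⟨z, h⟩, t)) :=
    fun z h t => dif_pos h
  have hβ_cont : ContinuousOn β (Prod.fst ⁻¹' S) := by
    rw [continuousOn_iff_continuous_domRestrict]
    have : (Prod.fst ⁻¹' S).domRestrict β =
        fun w : (Prod.fst ⁻¹' S : Set (Z × I)) => i (α (⟨w.1.1, w.2⟩, w.1.2)) :=
      funext fun w => hβS w.1.1 w.2 w.1.2
    rw [this]
    fun_prop
  have hβ0 : ∀ z ∈ S, β (z, 0) = (f z).1 := fun z h => by rw [hβS z h, hα0]; exact ha ⟨z, h⟩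
  have hβp : ∀ z ∈ S, ∀ t, pX (β (z, t)) = H (z, t) := fun z h t => by
    rw [hβS z h, hover, hα]; rfl
  -- from the time where the level zero is reached, lift the homotopy to `X`
  obtain ⟨g, hgS, hg0⟩ := exists_continuousMap_glue (T := {z | (f z).2 = 0}) hS
    (isClosed_eq (by fun_prop) continuous_const) (fun z => (hfM z).symm)
    (f := fun z => β (z, (f z).2)) (g := fun z => (f z).1)
    (hβ_cont.comp (by fun_prop) (fun z hz => hz)) (by fun_prop)
    (fun z hz h0 => by
      have h0 : (f z).2 = 0 := h0
      simp only [h0, hβ0 z hz])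
  obtain ⟨K, hK0, hK⟩ := hpX.exists_lift g
    (H.comp ⟨fun w : Z × I => (w.1, truncAdd (f w.1).2 w.2), by fun_prop⟩) (fun z => by
      by_cases h : z ∈ S
      · simp [hgS z h, hβp z h, truncAdd_zero]
      · have h0 := (hfM z).resolve_right h
        simp [hg0 z h0, hf, truncAdd_zero, h0])
  have hcases : ∀ w : Z × I, (w.1 ∈ S ∧ w.2 ≤ (f w.1).2) ∨ (f w.1).2 ≤ w.2 := fun w => by
    rcases hfM w.1 with h | h
    · exact Or.inr (h.trans_le w.2.2.1)
    · exact (le_total w.2 (f w.1).2).imp (fun h' => ⟨h, h'⟩) id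
  obtain ⟨F, hFS, hF0⟩ := exists_continuousMap_glue
    (S := {w : Z × I | w.1 ∈ S ∧ w.2 ≤ (f w.1).2}) (T := {w : Z × I | (f w.1).2 ≤ w.2})
    ((hS.preimage continuous_fst).inter (isClosed_le (by fun_prop) (by fun_prop)))
    (isClosed_le (by fun_prop) (by fun_prop))
    hcases
    (f := fun w => (β w, truncSub (f w.1).2 w.2))
    (g := fun w => (K (w.1, truncSub w.2 (f w.1).2), 0))
    ((hβ_cont.mono fun w hw => hw.1).prodMk (by fun_prop)) (by fun_prop)
    (fun w hw hw' => by
      obtain ⟨z, t⟩ := w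
      obtain rfl : t = (f z).2 := le_antisymm hw.2 hw'
      simp [truncSub_eq_zero le_rfl, hK0, hgS z hw.1])
  refine ⟨F, fun w => ?_, fun z => ?_, fun w => ?_⟩
  · rcases hcases w with h | h
    · right
      rw [hFS w h]
      exact ⟨_, (hβS w.1 h.1 w.2).symm⟩
    · left
      rw [hF0 w h]
  · by_cases h : z ∈ S
    · rw [hFS (z, 0) ⟨h, (f z).2.2.1⟩]
      simp [hβ0 z h, truncSub_zero]
    · have h0 := (hfM z).resolve_right h
      rw [hF0 (z, 0) h0.le]
      simp only [h0, truncSub_zero, hK0, hg0 z h0]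
      exact Prod.ext rfl h0.symm
  · rcases hcases w with h | h
    · rw [hFS w h]
      exact hβp w.1 h.1 w.2
    · rw [hF0 w h]
      simp [hK, truncAdd_truncSub h]

/-- For an h-cofibration there are a homotopy `h` starting at the identity and a function `φ`
vanishing on the subspace such that `h` carries `x` into the subspace at time `φ x`, as soon as
`φ x < 1`. -/
lemma IsHCofibration.exists_homotopy {A X : Type*} [TopologicalSpace A] [TopologicalSpace X]
    {i : C(A, X)} (hi : IsHCofibration i) :
    ∃ (h : C(X × I, X)) (φ : C(X, I)), (∀ x, h (x, 0) = x) ∧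
      (∀ x ∈ Set.range i, φ x = 0) ∧ ∀ x, φ x < 1 → h (x, φ x) ∈ Set.range i := by
  obtain ⟨hcl, r, hrM, hr⟩ := hi
  let d : C(X × I, ℝ) := ⟨fun w => (w.2 : ℝ) - (r w).2, by fun_prop⟩
  have hd1 : ∀ x, ‖d.curry x‖ ≤ 1 := fun x => (ContinuousMap.norm_le _ zero_le_one).2 fun t => by
    change |(t : ℝ) - (r (x, t)).2| ≤ 1
    rw [abs_le]
    constructor <;> linarith [t.2.1, t.2.2, (r (x, t)).2.2.1, (r (x, t)).2.2.2]
  let φ : C(X, I) := ⟨fun x => ⟨‖d.curry x‖, norm_nonneg _, hd1 x⟩, by fun_prop⟩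
  refine ⟨⟨fun w => (r w).1, by fun_prop⟩, φ, fun x => ?_, fun x hx => ?_, fun x hx => ?_⟩
  · simp [hr (x, 0) (Or.inl rfl)]
  · have : d.curry x = 0 := by
      ext t
      simp [d, hr (x, t) (Or.inr hx)]
    exact Subtype.ext (by simp [φ, this])
  · have hclosed : IsClosed {s : I | (r (x, s)).1 ∈ Set.range i} :=
      hcl.isClosed_range.preimage (by fun_prop)
    have hsub : Set.Ioi (φ x) ⊆ {s : I | (r (x, s)).1 ∈ Set.range i} := fun s hs => by
      refine (hrM (x, s)).resolve_left fun h0 => ?_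
      have h1 : |(s : ℝ) - (r (x, s)).2| ≤ φ x := (d.curry x).norm_coe_le_norm s
      have h2 : (φ x : ℝ) < s := hs
      rw [h0] at h1
      simp only [Set.Icc.coe_zero, sub_zero] at h1
      linarith [le_abs_self (s : ℝ)]
    have := closure_minimal hsub hclosed
    rw [closure_Ioi' (a := φ x) ⟨1, hx⟩] at this
    exact this Set.self_mem_Ici

/-- **Heath–Kamps.** An h-cofibration `i : A → X` over `B` between spaces whose structure maps
to `B` are Hurewicz fibrations is an f-cofibration over `B`. -/
theorem isFCofibration_of_isHCofibration_of_fibrant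
    {B A X : Type*} [TopologicalSpace B] [TopologicalSpace A] [TopologicalSpace X]
    (pA : C(A, B)) (pX : C(X, B))
    (hpA : IsHurewiczFibration pA) (hpX : IsHurewiczFibration pX)
    (i : C(A, X)) (hover : ∀ a, pX (i a) = pA a)
    (hi : IsHCofibration i) :
    IsFCofibration i pX := by
  obtain ⟨h, φ, h0, hφ, hA⟩ := hi.exists_homotopy
  let ψ : C(X × I, I) := ⟨fun w => min w.2 (φ w.1), by fun_prop⟩
  have hψ : ∀ w : X × I, (w.2 = 0 ∨ w.1 ∈ Set.range i) → ψ w = 0 := by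
    rintro w (hw | hw)
    · simp [ψ, hw]
    · simp [ψ, hφ _ hw]
  -- lift the reverse of the homotopy `h`, projected to `B`, and stop at time `ψ`
  obtain ⟨F, hFM, hF0, hF⟩ := exists_lift_mappingCylinder hpA hpX hover hi.1
    (Z := X × I) ⟨fun w => (h (w.1, ψ w), truncSub w.2 (φ w.1)), by fun_prop⟩
    (fun w => by
      rcases le_or_gt w.2 (φ w.1) with hw | hw
      · exact Or.inl (truncSub_eq_zero hw)
      · right
        simpa [ψ, min_eq_right hw.le] using hA w.1 (hw.trans_le unitInterval.le_one'))
    ⟨fun w => pX (h (w.1.1, truncSub (ψ w.1) w.2)), by fun_prop⟩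
    (fun w => by simp [truncSub_zero])
  refine ⟨hi.1, ⟨fun w => F (w, ψ w), by fun_prop⟩, fun w => hFM _, fun w hw => ?_, fun w => ?_⟩
  · simp only [ContinuousMap.coe_mk, hψ w hw, hF0, h0]
    refine Prod.ext rfl ?_
    rcases hw with hw | hw
    · simp [hw, truncSub_eq_zero (unitInterval.nonneg' (t := φ w.1))]
    · simp [hφ _ hw, truncSub_zero]
  · simp [hF, truncSub_eq_zero le_rfl, h0]
end

section
/- Let i : X → Y be an f-cofibration of spaces over B such that both structure maps p_X : X → B and p_Y : Y → B are Hurewicz fibrations. Then there exists a path-lifting function for p_Y that restricts to one for p_X: a continuous map s : Y ×_B C([0,1],B) → C([0,1],Y) (defined on pairs (y,γ) with p_Y(y) = γ(0)) with s(y,γ)(0) = y and p_Y ∘ s(y,γ) = γ, such that for every x ∈ X and every path γ in B with γ(0) = p_X(x), the lifted path s(i(x),γ) takes all its values in i(X). -/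
open unitInterval Topology

/-- The path in `[0,1]` moving from `a` towards `t` at unit speed, at time `u`. -/
noncomputable def moveTowards (a t u : I) : I :=
  Set.projIcc (0 : ℝ) 1 zero_le_one (max ((a : ℝ) - u) (min (t : ℝ) (a + u)))

lemma continuous_moveTowards :
    Continuous fun v : I × I × I => moveTowards v.1 v.2.1 v.2.2 := by
  unfold moveTowards
  exact continuous_projIcc.comp (by fun_prop)

lemma moveTowards_zero (a t : I) : moveTowards a t 0 = a := by
  simp [moveTowards]

/-- The distance between two points of `[0,1]`, as a point of `[0,1]`. -/
noncomputable def unitDist (a t : I) : I :=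
  Set.projIcc (0 : ℝ) 1 zero_le_one |(t : ℝ) - a|

lemma continuous_unitDist : Continuous fun v : I × I => unitDist v.1 v.2 := by
  unfold unitDist
  exact continuous_projIcc.comp (by fun_prop)

lemma coe_unitDist (a t : I) : (unitDist a t : ℝ) = |(t : ℝ) - a| := by
  have h : |(t : ℝ) - a| ≤ 1 :=
    abs_le.2 ⟨by linarith [t.2.1, a.2.2], by linarith [t.2.2, a.2.1]⟩
  simp [unitDist, Set.projIcc, h]

lemma unitDist_self (a : I) : unitDist a a = 0 :=
  Subtype.ext (by simp [coe_unitDist])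

lemma moveTowards_unitDist (a t : I) : moveTowards a t (unitDist a t) = t := by
  have h : max ((a : ℝ) - unitDist a t) (min (t : ℝ) (a + unitDist a t)) = t := by
    rw [coe_unitDist, min_eq_left (by linarith [le_abs_self ((t : ℝ) - a)]),
      max_eq_right (by linarith [neg_abs_le ((t : ℝ) - a)])]
  simp [moveTowards, h]

/-- Path-lifting problems for `p` together with a time at which to evaluate the lift. -/
abbrev LiftTime {Y B : Type*} [TopologicalSpace Y] [TopologicalSpace B] (p : C(Y, B)) :=
  {q : Y × C(I, B) // p q.1 = q.2 0} × I

/-- Given a retraction onto `(Y × {0}) ∪ (i(X) × [0,1])` over `B`, a path-lifting function for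
`pX` defines partial lifts, ending at time `(r (y, t)).2`, depending continuously on the data. -/
lemma exists_lift_along_retraction
    {B X Y : Type*} [TopologicalSpace B] [TopologicalSpace X] [TopologicalSpace Y]
    {pX : C(X, B)} {pY : C(Y, B)} (hpX : IsHurewiczFibration pX)
    {i : C(X, Y)} (hover : ∀ x, pY (i x) = pX x) (hi : IsClosedEmbedding i)
    {r : C(Y × I, Y × I)} (hr : ∀ z, (r z).2 = 0 ∨ (r z).1 ∈ Set.range i)
    (hrB : ∀ z, pY (r z).1 = pY z.1) :
    ∃ g : C(LiftTime pY, Y),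
      (∀ z, pY (g z) = z.1.1.2 (r (z.1.1.1, z.2)).2) ∧
      (∀ z, (r (z.1.1.1, z.2)).2 = 0 → g z = (r (z.1.1.1, z.2)).1) ∧
      ∀ z, (r (z.1.1.1, z.2)).1 ∈ Set.range i → g z ∈ Set.range i := by
  classical
  obtain ⟨l, hl⟩ := hpX
  let ρ : C(LiftTime pY, Y × I) := ⟨fun z => r (z.1.1.1, z.2), by fun_prop⟩
  let S : Set (LiftTime pY) := {z | (ρ z).1 ∈ Set.range i}
  let T : Set (LiftTime pY) := {z | (ρ z).2 = 0}
  have hS : IsClosed S := hi.isClosed_range.preimage (by fun_prop)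
  have hT : IsClosed T := isClosed_singleton.preimage (f := fun z => (ρ z).2) (by fun_prop)
  let e := hi.isEmbedding.toHomeomorph
  let x : S → X := fun z => e.symm ⟨(ρ z.1).1, z.2⟩
  have hx : Continuous x := e.symm.continuous.comp (by fun_prop)
  have hix : ∀ z : S, i (x z) = (ρ z.1).1 := fun z =>
    congrArg Subtype.val (e.apply_symm_apply ⟨(ρ z.1).1, z.2⟩)
  have hstart : ∀ z : S, pX (x z) = z.1.1.1.2 0 := fun z => by
    rw [← hover, hix, ← z.1.1.2]
    exact hrB _
  let f : S → Y := fun z => i (l ⟨(x z, z.1.1.1.2), hstart z⟩ (ρ z.1).2)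
  have hf : Continuous f := by
    have h : Continuous fun z : S =>
        (⟨(x z, z.1.1.1.2), hstart z⟩ : {q : X × C(I, B) // pX q.1 = q.2 0}) :=
      Continuous.subtype_mk (by fun_prop) _
    have h' := l.continuous.comp h
    exact i.continuous.comp (h'.eval (by fun_prop))
  let g : LiftTime pY → Y := fun z => if h : z ∈ S then f ⟨z, h⟩ else (ρ z).1
  have hgS : ∀ z (h : z ∈ S), g z = f ⟨z, h⟩ := fun z h => dif_pos h
  have hgT : ∀ z, z ∈ T → g z = (ρ z).1 := fun z h => by
    by_cases hz : z ∈ S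
    · have h0 : (ρ z).2 = 0 := h
      rw [hgS z hz, ← hix ⟨z, hz⟩]
      simp only [f, h0, (hl _).1]
    · exact dif_neg hz
  have hg : Continuous g := by
    have hcover : T ∪ S = Set.univ := Set.eq_univ_of_forall fun z => hr (z.1.1.1, z.2)
    rw [← continuousOn_univ, ← hcover]
    refine ContinuousOn.union_of_isClosed ?_ ?_ hT hS
    · exact ContinuousOn.congr (by fun_prop) hgT
    · rw [continuousOn_iff_continuous_domRestrict]
      exact hf.congr fun z => (hgS z.1 z.2).symm
  refine ⟨⟨g, hg⟩, fun z => ?_, hgT, fun z hz => ?_⟩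
  · change pY (g z) = z.1.1.2 (ρ z).2
    rcases hr (z.1.1.1, z.2) with h | h
    · have h0 : (ρ z).2 = 0 := h
      rw [hgT z h, h0, ← z.1.2]
      exact hrB _
    · rw [hgS z h]
      simp only [f, hover, (hl _).2]
  · exact ⟨_, (hgS z hz).symm⟩

/-- **Dold's lemma.** If `i : X → Y` is an f-cofibration of spaces over `B` whose structure
maps are Hurewicz fibrations, then the path-lifting function for `pY` can be chosen so that it
restricts to a path-lifting function for `pX`, i.e. paths starting in `i(X)` lift into `i(X)`. -/
theorem exists_pathLifting_restricting
    {B X Y : Type*} [TopologicalSpace B] [TopologicalSpace X] [TopologicalSpace Y]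
    (pX : C(X, B)) (pY : C(Y, B))
    (hpX : IsHurewiczFibration pX) (hpY : IsHurewiczFibration pY)
    (i : C(X, Y)) (hover : ∀ x, pY (i x) = pX x)
    (hi : IsFCofibration i pY) :
    ∃ s : C({q : Y × C(I, B) // pY q.1 = q.2 0}, C(I, Y)),
      (∀ q, s q 0 = q.1.1) ∧
      (∀ q (t : I), pY (s q t) = q.1.2 t) ∧
      ∀ (x : X) (γ : C(I, B)) (hγ : γ 0 = pX x) (t : I),
        s ⟨(i x, γ), by rw [hover x, hγ]⟩ t ∈ Set.range ⇑i := by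
  obtain ⟨hemb, r, hr, hrfix, hrB⟩ := hi
  obtain ⟨g, hgB, hg0, hgX⟩ := exists_lift_along_retraction hpX hover hemb hr hrB
  obtain ⟨l, hl⟩ := hpY
  let a : C(LiftTime pY, I) := ⟨fun z => (r (z.1.1.1, z.2)).2, by fun_prop⟩
  let path : C(LiftTime pY, C(I, B)) := ContinuousMap.curry
    ⟨fun w : LiftTime pY × I => w.1.1.1.2 (moveTowards (a w.1) w.1.2 w.2), by
      have h : Continuous fun w : LiftTime pY × I => moveTowards (a w.1) w.1.2 w.2 :=
        continuous_moveTowards.comp (f := fun w : LiftTime pY × I => (a w.1, w.1.2, w.2))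
          (by fun_prop)
      have h' : Continuous fun w : LiftTime pY × I => w.1.1.1.2 := by fun_prop
      exact h'.eval h⟩
  have hpath : ∀ z u, path z u = z.1.1.2 (moveTowards (a z) z.2 u) := fun _ _ => rfl
  have hstart : ∀ z, pY (g z) = path z 0 := fun z => by
    rw [hpath, moveTowards_zero, hgB]
    rfl
  let S : C(LiftTime pY, Y) := ⟨fun z => l ⟨(g z, path z), hstart z⟩ (unitDist (a z) z.2), by
    have h : Continuous fun z : LiftTime pY =>
        (⟨(g z, path z), hstart z⟩ : {q : Y × C(I, B) // pY q.1 = q.2 0}) :=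
      Continuous.subtype_mk (by fun_prop) _
    exact (l.continuous.comp h).eval
      (continuous_unitDist.comp (f := fun z : LiftTime pY => (a z, z.2)) (by fun_prop))⟩
  have hS : ∀ z, S z = l ⟨(g z, path z), hstart z⟩ (unitDist (a z) z.2) := fun _ => rfl
  have hSg : ∀ z : LiftTime pY, a z = z.2 → S z = g z := fun z h => by
    rw [hS, h, unitDist_self, (hl _).1]
  refine ⟨S.curry, fun q => ?_, fun q t => ?_, fun x γ hγ t => ?_⟩
  · have h : r (q.1.1, 0) = (q.1.1, 0) := hrfix _ (Or.inl rfl)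
    have h0 : (r (q.1.1, 0)).2 = 0 := by rw [h]
    rw [ContinuousMap.curry_apply, hSg (q, 0) h0, hg0 (q, 0) h0]
    exact congrArg Prod.fst h
  · rw [ContinuousMap.curry_apply, hS, (hl _).2, hpath, moveTowards_unitDist]
  · have h : r (i x, t) = (i x, t) := hrfix _ (Or.inr ⟨x, rfl⟩)
    rw [ContinuousMap.curry_apply, hSg _ (congrArg Prod.snd h)]
    exact hgX _ ⟨x, (congrArg Prod.fst h).symm⟩
end

section
/- Let X be a retractive space over A whose section i_X is an h-cofibration, and let g : Y → Y' be a map of retractive spaces over B whose sections i_Y, i_{Y'} are h-cofibrations. If g is a weak equivalence, then id_X ⊼ g : X ⊼ Y → X ⊼ Y' is a weak equivalence of retractive spaces over A × B. -/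
open unitInterval Topology

/-- The map induced by `f` on path components. -/
def inducedZerothHomotopy {X Y : Type*} [TopologicalSpace X] [TopologicalSpace Y]
    (f : C(X, Y)) : ZerothHomotopy X → ZerothHomotopy Y :=
  Quotient.map' f (fun _ _ h => Nonempty.map (fun p => p.map f.continuous) h)

/-- The map induced by `f` on generalized loops. -/
def inducedGenLoop {N : Type*} {X Y : Type*} [TopologicalSpace X] [TopologicalSpace Y]
    (f : C(X, Y)) {x : X} (p : GenLoop N X x) : GenLoop N Y (f x) :=
  ⟨f.comp p.1, fun y hy => by
    simp only [ContinuousMap.comp_apply]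
    rw [p.2 y hy]⟩

/-- The map induced by `f : X → Y` on homotopy groups `π_N(X, x) → π_N(Y, f x)`. -/
def inducedHomotopyGroup (N : Type*) {X Y : Type*} [TopologicalSpace X] [TopologicalSpace Y]
    (f : C(X, Y)) (x : X) : HomotopyGroup N X x → HomotopyGroup N Y (f x) :=
  Quotient.map' (inducedGenLoop f)
    (fun p q h => by
      obtain ⟨H⟩ := h
      exact ⟨{ toContinuousMap := f.comp H.toContinuousMap
               map_zero_left := fun y => congrArg f (H.map_zero_left y)
               map_one_left := fun y => congrArg f (H.map_one_left y)
               prop' := fun t y hy => congrArg f (H.prop' t y hy) }⟩)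

/-- A continuous map is a *weak homotopy equivalence* if it induces a bijection on path
components and bijections on all homotopy groups at every basepoint. -/
def IsWeakHomotopyEquiv {X Y : Type*} [TopologicalSpace X] [TopologicalSpace Y]
    (f : C(X, Y)) : Prop :=
  Function.Bijective (inducedZerothHomotopy f) ∧
  ∀ (n : ℕ) (x : X), Function.Bijective (inducedHomotopyGroup (Fin n) f x)

section ExtSmash

variable {A B X Y : Type*} [TopologicalSpace A] [TopologicalSpace B]
  [TopologicalSpace X] [TopologicalSpace Y]

/-- The relation generating the external smash product `X ⊼ Y` of a retractive space `X` over
`A` and a retractive space `Y` over `B`: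
`(x, i_Y b) ∼ (i_X (p_X x), i_Y b)` and `(i_X a, y) ∼ (i_X a, i_Y (p_Y y))`. -/
def SmashRel (iX : C(A, X)) (pX : C(X, A)) (iY : C(B, Y)) (pY : C(Y, B)) :
    X × Y → X × Y → Prop := fun z w =>
  (∃ x b, z = (x, iY b) ∧ w = (iX (pX x), iY b)) ∨
  (∃ a y, z = (iX a, y) ∧ w = (iX a, iY (pY y)))

/-- The total space of the external smash product `X ⊼ Y`. -/
abbrev ExtSmash (iX : C(A, X)) (pX : C(X, A)) (iY : C(B, Y)) (pY : C(Y, B)) : Type _ :=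
  Quot (SmashRel iX pX iY pY)

/-- The basepoint section of `X ⊼ Y` over `A × B`. -/
def extSmashSection (iX : C(A, X)) (pX : C(X, A)) (iY : C(B, Y)) (pY : C(Y, B)) :
    C(A × B, ExtSmash iX pX iY pY) :=
  ⟨fun ab => Quot.mk _ (iX ab.1, iY ab.2), continuous_quot_mk.comp (by fun_prop)⟩

/-- The projection of `X ⊼ Y` to `A × B`, induced by `p_X × p_Y`. -/
def extSmashProj (iX : C(A, X)) (pX : C(X, A)) (iY : C(B, Y)) (pY : C(Y, B))
    (hX : ∀ a, pX (iX a) = a) (hY : ∀ b, pY (iY b) = b) :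
    C(ExtSmash iX pX iY pY, A × B) :=
  ⟨Quot.lift (fun z => (pX z.1, pY z.2))
      (by rintro z w (⟨x, b, rfl, rfl⟩ | ⟨a, y, rfl, rfl⟩) <;> simp [hX, hY]),
    continuous_quot_lift _ (by fun_prop)⟩

end ExtSmash

section ExtSmashMap

variable {A B X X' Y Y' : Type*} [TopologicalSpace A] [TopologicalSpace B]
  [TopologicalSpace X] [TopologicalSpace X'] [TopologicalSpace Y] [TopologicalSpace Y']

/-- The map `f ⊼ g : X ⊼ Y → X' ⊼ Y'` induced on external smash products by maps of
retractive spaces `f : X → X'` over `A` and `g : Y → Y'` over `B`. -/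
def extSmashMap (iX : C(A, X)) (pX : C(X, A)) (iY : C(B, Y)) (pY : C(Y, B))
    (iX' : C(A, X')) (pX' : C(X', A)) (iY' : C(B, Y')) (pY' : C(Y', B))
    (f : C(X, X')) (g : C(Y, Y'))
    (hfi : ∀ a, f (iX a) = iX' a) (hfp : ∀ x, pX' (f x) = pX x)
    (hgi : ∀ b, g (iY b) = iY' b) (hgp : ∀ y, pY' (g y) = pY y) :
    C(ExtSmash iX pX iY pY, ExtSmash iX' pX' iY' pY') :=
  ⟨Quot.lift (fun z => Quot.mk _ (f z.1, g z.2))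
      (by
        rintro z w (⟨x, b, rfl, rfl⟩ | ⟨a, y, rfl, rfl⟩) <;> apply Quot.sound
        · exact Or.inl ⟨f x, b, by rw [hgi], by rw [hgi, hfi, hfp]⟩
        · exact Or.inr ⟨a, g y, by rw [hfi], by rw [hfi, hgi, hgp]⟩),
    continuous_quot_lift _ (continuous_quot_mk.comp (by fun_prop))⟩

end ExtSmashMap

section Gluing

variable {K Z : Type*} [TopologicalSpace K] [TopologicalSpace Z]

theorem homotopicRel_iff {S : Set K} {f g : C(K, Z)} :
    f.HomotopicRel g S ↔ ∃ F : C(I × K, Z), (∀ x, F (0, x) = f x) ∧ (∀ x, F (1, x) = g x) ∧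
      ∀ t, ∀ x ∈ S, F (t, x) = f x := by
  constructor
  · rintro ⟨F⟩
    exact ⟨F.toContinuousMap, F.map_zero_left, F.map_one_left, fun t x hx => F.prop' t x hx⟩
  · rintro ⟨F, h0, h1, hS⟩
    exact ⟨{ toContinuousMap := F, map_zero_left := h0, map_one_left := h1, prop' := hS }⟩

/-- Continuous maps on two closed sets covering a space, agreeing on the overlap, glue. -/
theorem exists_glue {P Q : Set K} (hP : IsClosed P) (hQ : IsClosed Q)
    (hPQ : ∀ x, x ∈ P ∨ x ∈ Q) (u : C(P, Z)) (v : C(Q, Z))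
    (h : ∀ x (hp : x ∈ P) (hq : x ∈ Q), u ⟨x, hp⟩ = v ⟨x, hq⟩) :
    ∃ w : C(K, Z), (∀ x (hx : x ∈ P), w x = u ⟨x, hx⟩) ∧ ∀ x (hx : x ∈ Q), w x = v ⟨x, hx⟩ := by
  classical
  let w : K → Z := fun x => if hx : x ∈ P then u ⟨x, hx⟩ else v ⟨x, (hPQ x).resolve_left hx⟩
  have hwP : ∀ x (hx : x ∈ P), w x = u ⟨x, hx⟩ := fun x hx => dif_pos hx
  have hwQ : ∀ x (hx : x ∈ Q), w x = v ⟨x, hx⟩ := fun x hx => by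
    by_cases hp : x ∈ P
    · rw [hwP x hp, h x hp hx]
    · exact dif_neg hp
  refine ⟨⟨w, ?_⟩, hwP, hwQ⟩
  rw [← continuousOn_univ, ← Set.eq_univ_of_forall (s := P ∪ Q) hPQ]
  refine ContinuousOn.union_of_isClosed ?_ ?_ hP hQ
  · rw [continuousOn_iff_continuous_domRestrict]
    exact u.continuous.congr fun x => (hwP x x.2).symm
  · rw [continuousOn_iff_continuous_domRestrict]
    exact v.continuous.congr fun x => (hwQ x x.2).symm

end Gluing

/-- The closed unit ball of a normed space. -/
abbrev UBall (E : Type*) [NormedAddCommGroup E] : Type _ := Metric.closedBall (0 : E) 1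

/-- The unit sphere, as a subset of the closed unit ball. -/
def USph (E : Type*) [NormedAddCommGroup E] : Set (UBall E) := {x | ‖(x : E)‖ = 1}

/-- Relative lifting up to homotopy: a map of pairs from `(K, S)` to the map `f` can be compressed
into the source of `f`, relative to `S`. -/
def LiftsRel {Z Z' : Type*} [TopologicalSpace Z] [TopologicalSpace Z'] (f : C(Z, Z'))
    {K : Type*} [TopologicalSpace K] (S : Set K) : Prop :=
  ∀ (α : C(S, Z)) (β : C(K, Z')), (∀ x : S, f (α x) = β x) →
    ∃ γ : C(K, Z), (∀ x : S, γ x = α x) ∧ (f.comp γ).HomotopicRel β S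

/-- All relative lifting problems for cubes are solvable. -/
def HasCubeLifts {Z Z' : Type*} [TopologicalSpace Z] [TopologicalSpace Z'] (f : C(Z, Z')) : Prop :=
  ∀ n : ℕ, LiftsRel f (USph (Fin n → ℝ))

theorem LiftsRel.of_homeomorph {Z Z' : Type*} [TopologicalSpace Z] [TopologicalSpace Z']
    {f : C(Z, Z')} {K K' : Type*} [TopologicalSpace K] [TopologicalSpace K'] {S : Set K}
    {S' : Set K'} (e : K ≃ₜ K') (he : ∀ x, x ∈ S ↔ e x ∈ S') (h : LiftsRel f S) :
    LiftsRel f S' := by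
  intro α β hαβ
  have he' : ∀ y, y ∈ S' ↔ e.symm y ∈ S := fun y => by rw [he, e.apply_symm_apply]
  obtain ⟨γ, hγ, hh⟩ := h (α.comp ⟨fun x => ⟨e x, (he x).1 x.2⟩, by fun_prop⟩)
    (β.comp ⟨e, e.continuous⟩) (fun x => hαβ _)
  rw [homotopicRel_iff] at hh
  obtain ⟨F, h0, h1, hS⟩ := hh
  refine ⟨γ.comp ⟨e.symm, e.symm.continuous⟩, fun x => ?_, ?_⟩
  · have := hγ ⟨e.symm x, (he' x).1 x.2⟩
    simpa using this
  · rw [homotopicRel_iff]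
    refine ⟨F.comp ⟨fun p => (p.1, e.symm p.2), by fun_prop⟩, fun x => ?_, fun x => ?_,
      fun t x hx => ?_⟩
    · simpa using h0 (e.symm x)
    · simpa using h1 (e.symm x)
    · simpa using hS t (e.symm x) ((he' x).1 hx)

section Ball

variable {E Z Z' : Type*} [NormedAddCommGroup E] [NormedSpace ℝ E] [TopologicalSpace Z]
  [TopologicalSpace Z']

theorem inv_smul_mem_closedBall {x : E} {c : ℝ} (h : ‖x‖ ≤ c) :
    c⁻¹ • x ∈ Metric.closedBall (0 : E) 1 := by
  have hc : 0 ≤ c := (norm_nonneg x).trans h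
  rw [mem_closedBall_zero_iff, norm_smul, norm_inv, Real.norm_of_nonneg hc, inv_mul_eq_div]
  exact div_le_one_of_le₀ h hc

theorem norm_inv_norm_smul {x : E} (h : 0 < ‖x‖) : ‖‖x‖⁻¹ • x‖ = 1 := by
  rw [norm_smul, norm_inv, norm_norm, inv_mul_cancel₀ h.ne']

/-- Radial projection of a nonzero vector to the unit sphere. -/
noncomputable def toUSph (x : E) (h : 0 < ‖x‖) : USph E :=
  ⟨⟨‖x‖⁻¹ • x, inv_smul_mem_closedBall le_rfl⟩, norm_inv_norm_smul h⟩

theorem toUSph_of_mem (x : UBall E) (hx : x ∈ USph E) (h : 0 < ‖(x : E)‖) :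
    toUSph (x : E) h = ⟨x, hx⟩ := by
  apply Subtype.ext; apply Subtype.ext
  have : ‖(x : E)‖ = 1 := hx
  simp [toUSph, this]

theorem continuous_toUSph {T : Type*} [TopologicalSpace T] {g : T → E} (hg : Continuous g)
    (h : ∀ t, 0 < ‖g t‖) : Continuous fun t => toUSph (g t) (h t) := by
  refine Continuous.subtype_mk (Continuous.subtype_mk ?_ _) _
  exact (hg.norm.inv₀ fun t => (h t).ne').smul hg

theorem UBall.norm_le_one {E : Type*} [NormedAddCommGroup E] (x : UBall E) :
    ‖(x : E)‖ ≤ 1 := mem_closedBall_zero_iff.1 x.2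

/-- Gluing a family of maps on the ball, shrunk to radius `1/2`, with a map on a collar. -/
theorem exists_collar {T : Type*} [TopologicalSpace T] (γ : C(T × UBall E, Z))
    (a : C(USph E × I, Z)) (h : ∀ t (x : USph E), γ (t, x) = a (x, 1)) :
    ∃ w : C(T × UBall E, Z),
      (∀ t (x : UBall E) (hx : ‖(x : E)‖ ≤ 1 / 2),
        w (t, x) = γ (t, ⟨(1 / 2 : ℝ)⁻¹ • (x : E), inv_smul_mem_closedBall hx⟩)) ∧
      ∀ t (x : UBall E) (h0 : 0 < ‖(x : E)‖) (_ : 1 / 2 ≤ ‖(x : E)‖),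
        w (t, x) = a (toUSph (x : E) h0, Set.projIcc 0 1 zero_le_one (2 - 2 * ‖(x : E)‖)) := by
  let P : Set (T × UBall E) := {p | ‖(p.2 : E)‖ ≤ 1 / 2}
  let Q : Set (T × UBall E) := {p | 1 / 2 ≤ ‖(p.2 : E)‖}
  have hQ : ∀ p : Q, 0 < ‖(p.1.2 : E)‖ := fun p => lt_of_lt_of_le (by norm_num) p.2
  obtain ⟨w, hw1, hw2⟩ := exists_glue (P := P) (Q := Q)
    (isClosed_le (by fun_prop) (by fun_prop)) (isClosed_le (by fun_prop) (by fun_prop))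
    (fun p => le_total (α := ℝ) _ _)
    (γ.comp ⟨fun p => (p.1.1, ⟨(1 / 2 : ℝ)⁻¹ • (p.1.2 : E), inv_smul_mem_closedBall p.2⟩),
      by fun_prop⟩)
    (a.comp ⟨fun p => (toUSph (p.1.2 : E) (hQ p),
      Set.projIcc 0 1 zero_le_one (2 - 2 * ‖(p.1.2 : E)‖)),
      (continuous_toUSph (by fun_prop) _).prodMk (continuous_projIcc.comp (by fun_prop))⟩)
    (by
      rintro ⟨t, x⟩ hp hq
      have hx : ‖(x : E)‖ = 1 / 2 := le_antisymm hp hq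
      have h0 : 0 < ‖(x : E)‖ := by rw [hx]; norm_num
      have h1 := h t (toUSph (x : E) h0)
      have h2 : Set.projIcc (0 : ℝ) 1 zero_le_one (2 - 2 * ‖(x : E)‖) = 1 := by
        rw [hx]; exact Set.projIcc_of_right_le _ (by norm_num)
      simp only [ContinuousMap.comp_apply, ContinuousMap.coe_mk, h2]
      rw [← h1]
      congr 2
      apply Subtype.ext
      simp [toUSph, hx])
  exact ⟨w, fun t x hx => hw1 (t, x) hx, fun t x h0 hx => hw2 (t, x) hx⟩

/-- The homotopy extension property of the ball relative to its boundary sphere. -/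
theorem exists_homotopy_extension (β : C(UBall E, Z)) (a : C(USph E × I, Z))
    (h : ∀ x : USph E, a (x, 0) = β x) :
    ∃ b : C(UBall E × I, Z), (∀ x, b (x, 0) = β x) ∧ ∀ (x : USph E) t, b (x, t) = a (x, t) := by
  let P : Set (UBall E × I) := {p | ‖(p.1 : E)‖ ≤ 1 - (p.2 : ℝ) / 2}
  let Q : Set (UBall E × I) := {p | 1 - (p.2 : ℝ) / 2 ≤ ‖(p.1 : E)‖}
  have hpos : ∀ t : I, (0 : ℝ) < 1 - (t : ℝ) / 2 := fun t => by linarith [t.2.2]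
  have hQ : ∀ p : Q, 0 < ‖(p.1.1 : E)‖ := fun p => lt_of_lt_of_le (hpos p.1.2) p.2
  obtain ⟨w, hw1, hw2⟩ := exists_glue (P := P) (Q := Q)
    (isClosed_le (by fun_prop) (by fun_prop)) (isClosed_le (by fun_prop) (by fun_prop))
    (fun p => le_total (α := ℝ) _ _)
    (β.comp ⟨fun p => ⟨(1 - (p.1.2 : ℝ) / 2)⁻¹ • (p.1.1 : E), inv_smul_mem_closedBall p.2⟩,
      Continuous.subtype_mk (Continuous.smul (Continuous.inv₀ (by fun_prop)
        fun p : P => (hpos p.1.2).ne') (by fun_prop)) _⟩)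
    (a.comp ⟨fun p => (toUSph (p.1.1 : E) (hQ p),
      Set.projIcc 0 1 zero_le_one ((p.1.2 : ℝ) - (2 - 2 * ‖(p.1.1 : E)‖))),
      (continuous_toUSph (by fun_prop) _).prodMk (continuous_projIcc.comp (by fun_prop))⟩)
    (by
      rintro ⟨x, t⟩ hp hq
      have hx : ‖(x : E)‖ = 1 - (t : ℝ) / 2 := le_antisymm hp hq
      have h0 : 0 < ‖(x : E)‖ := by rw [hx]; exact hpos t
      have h1 := h (toUSph (x : E) h0)
      have h2 : Set.projIcc (0 : ℝ) 1 zero_le_one ((t : ℝ) - (2 - 2 * ‖(x : E)‖)) = 0 := by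
        rw [hx]; exact Set.projIcc_of_le_left _ (by linarith)
      simp only [ContinuousMap.comp_apply, ContinuousMap.coe_mk, h2]
      rw [h1]
      congr 1
      apply Subtype.ext
      simp [toUSph, hx])
  refine ⟨w, fun x => ?_, fun x t => ?_⟩
  · rw [hw1 (x, 0) (by simpa [P] using UBall.norm_le_one x)]
    simp
  · have hx : ‖(x.1 : E)‖ = 1 := x.2
    have h0 : 0 < ‖(x.1 : E)‖ := by rw [hx]; norm_num
    rw [hw2 (x, t) (by simp only [Q, Set.mem_ofPred_eq, hx]; linarith [t.2.1])]
    simp only [ContinuousMap.comp_apply, ContinuousMap.coe_mk]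
    rw [toUSph_of_mem x.1 x.2 h0]
    simp [hx]

/-- Extendability over the ball is invariant under homotopy. -/
theorem exists_extension_of_homotopy (a : C(USph E × I, Z)) (γ : C(UBall E, Z))
    (h : ∀ x : USph E, γ x = a (x, 1)) :
    ∃ γ' : C(UBall E, Z), ∀ x : USph E, γ' x = a (x, 0) := by
  obtain ⟨b, -, hb⟩ := exists_homotopy_extension γ
    (a.comp ⟨fun p => (p.1, σ p.2), by fun_prop⟩) (fun x => by simp [h])
  exact ⟨b.comp ⟨fun x => (x, 1), by fun_prop⟩, fun x => by simp [hb]⟩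

/-- Solvability of a relative lifting problem is invariant under homotopy of the problem. -/
theorem exists_lift_of_homotopy (f : C(Z, Z')) (a : C(USph E × I, Z)) (b : C(UBall E × I, Z'))
    (hab : ∀ (x : USph E) t, f (a (x, t)) = b (x, t)) (γ : C(UBall E, Z))
    (hγ : ∀ x : USph E, γ x = a (x, 1))
    (hh : (f.comp γ).HomotopicRel (b.comp ⟨fun x => (x, 1), by fun_prop⟩) (USph E)) :
    ∃ γ' : C(UBall E, Z), (∀ x : USph E, γ' x = a (x, 0)) ∧
      (f.comp γ').HomotopicRel (b.comp ⟨fun x => (x, 0), by fun_prop⟩) (USph E) := by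
  rw [homotopicRel_iff] at hh
  obtain ⟨F, hF0, hF1, hFS⟩ := hh
  simp only [ContinuousMap.comp_apply, ContinuousMap.coe_mk] at hF0 hF1 hFS
  obtain ⟨w, hw1, hw2⟩ := exists_collar (γ.comp (ContinuousMap.snd : C(Unit × UBall E, UBall E))) a
    (fun t x => by simpa using hγ x)
  have hS : ∀ x : USph E, ‖((x : UBall E) : E)‖ = 1 := fun x => x.2
  have hp : ∀ x : USph E, 0 < ‖((x : UBall E) : E)‖ := fun x => by rw [hS]; norm_num
  have hproj0 : Set.projIcc (0 : ℝ) 1 zero_le_one 0 = 0 := Set.projIcc_of_le_left _ le_rfl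
  let γ' : C(UBall E, Z) := w.comp ⟨fun x => ((), x), by fun_prop⟩
  have hγ'1 : ∀ (x : UBall E) (hx : ‖(x : E)‖ ≤ 1 / 2),
      γ' x = γ ⟨(1 / 2 : ℝ)⁻¹ • (x : E), inv_smul_mem_closedBall hx⟩ := fun x hx => hw1 () x hx
  have hγ'2 : ∀ (x : UBall E) (h0 : 0 < ‖(x : E)‖) (_ : 1 / 2 ≤ ‖(x : E)‖),
      γ' x = a (toUSph (x : E) h0, Set.projIcc 0 1 zero_le_one (2 - 2 * ‖(x : E)‖)) :=
    fun x h0 hx => hw2 () x h0 hx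
  have hγ'S : ∀ x : USph E, γ' x = a (x, 0) := fun x => by
    rw [hγ'2 x (hp x) (by rw [hS]; norm_num), toUSph_of_mem x.1 x.2 (hp x), hS]
    norm_num [hproj0]
  refine ⟨γ', hγ'S, ?_⟩
  obtain ⟨W, hW1, hW2⟩ := exists_collar F (f.comp a)
    (fun t x => by simp [hFS t x x.2, hγ])
  refine ContinuousMap.HomotopicRel.trans (g := W.comp ⟨fun x => (1, x), by fun_prop⟩) ?_
    (ContinuousMap.HomotopicRel.symm ?_)
  · rw [homotopicRel_iff]
    refine ⟨W, fun x => ?_, fun x => rfl, fun t x hx => ?_⟩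
    · simp only [ContinuousMap.comp_apply]
      rcases le_total ‖(x : E)‖ (1 / 2) with hx | hx
      · rw [hW1 _ x hx, hγ'1 x hx, hF0]
      · have h0 : 0 < ‖(x : E)‖ := lt_of_lt_of_le (by norm_num) hx
        rw [hW2 _ x h0 hx, hγ'2 x h0 hx, ContinuousMap.comp_apply]
    · have h1 : ‖(x : E)‖ = 1 := hx
      have h0 : 0 < ‖(x : E)‖ := by rw [h1]; norm_num
      have h2 : 1 / 2 ≤ ‖(x : E)‖ := by rw [h1]; norm_num
      rw [hW2 _ x h0 h2, ContinuousMap.comp_apply, ContinuousMap.comp_apply, hγ'2 x h0 h2]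
  · have hpos : ∀ p : I × UBall E, 0 < max ‖(p.2 : E)‖ (1 - (p.1 : ℝ) / 2) := fun p =>
      lt_max_of_lt_right (by linarith [p.1.2.2])
    rw [homotopicRel_iff]
    refine ⟨b.comp ⟨fun p => (⟨(max ‖(p.2 : E)‖ (1 - (p.1 : ℝ) / 2))⁻¹ • (p.2 : E),
      inv_smul_mem_closedBall (le_max_left _ _)⟩,
      Set.projIcc 0 1 zero_le_one (min (p.1 : ℝ) (2 - 2 * ‖(p.2 : E)‖))), ?_⟩, ?_, ?_, ?_⟩
    · refine Continuous.prodMk (Continuous.subtype_mk (Continuous.smul (Continuous.inv₀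
        (by fun_prop) fun p => (hpos p).ne') (by fun_prop)) _)
        (continuous_projIcc.comp (by fun_prop))
    · intro x
      have h1 := UBall.norm_le_one x
      simp only [ContinuousMap.comp_apply, ContinuousMap.coe_mk, Set.Icc.coe_zero, zero_div,
        sub_zero, max_eq_right h1, inv_one, one_smul]
      rw [min_eq_left (by linarith), hproj0]
    · intro x
      simp only [ContinuousMap.comp_apply, ContinuousMap.coe_mk, Set.Icc.coe_one]
      rcases le_total ‖(x : E)‖ (1 / 2) with hx | hx
      · rw [hW1 _ x hx, hF1]
        congr 2
        · apply Subtype.ext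
          simp only
          rw [max_eq_right (by linarith)]
          norm_num
        · rw [min_eq_left (by linarith)]
          exact Set.projIcc_of_right_le _ le_rfl
      · have h0 : 0 < ‖(x : E)‖ := lt_of_lt_of_le (by norm_num) hx
        rw [hW2 _ x h0 hx, ContinuousMap.comp_apply, hab]
        congr 2
        · apply Subtype.ext
          simp only [toUSph]
          rw [max_eq_left (by linarith)]
        · rw [min_eq_right (by linarith)]
    · intro t x hx
      have h1 : ‖(x : E)‖ = 1 := hx
      simp only [ContinuousMap.comp_apply, ContinuousMap.coe_mk]
      congr 2
      · apply Subtype.ext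
        have h2 : max ‖(x : E)‖ (1 - (t : ℝ) / 2) = 1 := by
          rw [h1]; exact max_eq_left (by linarith [t.2.1])
        simp [h2]
      · rw [h1, min_eq_right (by linarith [t.2.1])]
        norm_num [hproj0]

end Ball

section Formal

variable {Z Z' Z'' P P' : Type*} [TopologicalSpace Z] [TopologicalSpace Z'] [TopologicalSpace Z'']
  [TopologicalSpace P] [TopologicalSpace P']

theorem LiftsRel.of_norm_preserving {E E' : Type*} [NormedAddCommGroup E] [NormedAddCommGroup E']
    {f : C(Z, Z')} (e : E ≃ₜ E') (he : ∀ x, ‖e x‖ = ‖x‖) (h : LiftsRel f (USph E)) :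
    LiftsRel f (USph E') := by
  refine h.of_homeomorph (e.subtype fun x => ?_) fun x => ?_
  · rw [mem_closedBall_zero_iff, mem_closedBall_zero_iff, he]
  · change ‖(x : E)‖ = 1 ↔ ‖e x‖ = 1
    rw [he]

theorem HasCubeLifts.liftsRel_pi {f : C(Z, Z')} (h : HasCubeLifts f) (N : Type*) [Fintype N] :
    LiftsRel f (USph (N → ℝ)) := by
  let k := Fintype.equivFin N
  let e : (Fin (Fintype.card N) → ℝ) ≃ₜ (N → ℝ) :=
    { toFun := fun x i => x (k i)
      invFun := fun y j => y (k.symm j)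
      left_inv := fun x => by ext; simp
      right_inv := fun y => by ext; simp
      continuous_toFun := by fun_prop
      continuous_invFun := by fun_prop }
  refine (h (Fintype.card N)).of_norm_preserving e fun x => le_antisymm ?_ ?_
  · exact (pi_norm_le_iff_of_nonneg (norm_nonneg _)).2 fun i => norm_le_pi_norm x _
  · refine (pi_norm_le_iff_of_nonneg (norm_nonneg _)).2 fun i => ?_
    have h1 : e x (k.symm i) = x i := congrArg x (k.apply_symm_apply i)
    exact h1 ▸ norm_le_pi_norm (e x) (k.symm i)

/-- The homeomorphism `R × Rᵐ ≃ Rᵐ⁺¹`. -/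
def consHomeomorph (R : Type*) [TopologicalSpace R] (m : ℕ) :
    (R × (Fin m → R)) ≃ₜ (Fin (m + 1) → R) where
  toFun p := Fin.cons p.1 p.2
  invFun v := (v 0, fun i => v i.succ)
  left_inv p := by simp
  right_inv v := by ext i; refine Fin.cases ?_ ?_ i <;> simp
  continuous_toFun := by
    refine continuous_pi fun i => ?_
    refine Fin.cases ?_ ?_ i
    · simpa using continuous_fst
    · intro j; simp only [Fin.cons_succ]; fun_prop
  continuous_invFun := by fun_prop

theorem norm_consHomeomorph (m : ℕ) (p : ℝ × (Fin m → ℝ)) : ‖consHomeomorph ℝ m p‖ = ‖p‖ := by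
  apply le_antisymm
  · refine (pi_norm_le_iff_of_nonneg (norm_nonneg _)).2 fun i => ?_
    refine Fin.cases ?_ (fun j => ?_) i
    · exact norm_fst_le p
    · exact (norm_le_pi_norm p.2 j).trans (norm_snd_le p)
  · rw [Prod.norm_def]
    refine max_le ?_ ((pi_norm_le_iff_of_nonneg (norm_nonneg _)).2 fun j => ?_)
    · exact norm_le_pi_norm (consHomeomorph ℝ m p) 0
    · exact norm_le_pi_norm (consHomeomorph ℝ m p) j.succ

theorem hasCubeLifts_id : HasCubeLifts (ContinuousMap.id Z) := fun _ _ β h =>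
  ⟨β, fun x => (h x).symm, .refl _⟩

theorem HasCubeLifts.comp {f : C(Z, Z')} {k : C(Z', Z'')} (hk : HasCubeLifts k)
    (hf : HasCubeLifts f) : HasCubeLifts (k.comp f) := by
  intro n α β h
  obtain ⟨γ', h1, h2⟩ := hk n (f.comp α) β h
  obtain ⟨γ, h3, h4⟩ := hf n α γ' (fun x => (h1 x).symm)
  exact ⟨γ, h3, (h4.comp_continuousMap k).trans h2⟩

theorem HasCubeLifts.id_prodMap {f : C(Z, Z')} (hf : HasCubeLifts f) :
    HasCubeLifts ((ContinuousMap.id P).prodMap f) := by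
  intro n α β h
  obtain ⟨γ, h1, h2⟩ := hf n (ContinuousMap.snd.comp α) (ContinuousMap.snd.comp β)
    (fun x => congrArg Prod.snd (h x))
  refine ⟨(ContinuousMap.fst.comp β).prodMk γ, fun x => ?_, ?_⟩
  · have := congrArg Prod.fst (h x)
    exact Prod.ext this.symm (h1 x)
  · rw [homotopicRel_iff] at h2 ⊢
    obtain ⟨F, hF0, hF1, hFS⟩ := h2
    exact ⟨⟨fun p => ((β p.2).1, F p), by fun_prop⟩, fun x => Prod.ext rfl (hF0 x),
      fun x => Prod.ext rfl (hF1 x), fun t x hx => Prod.ext rfl (hFS t x hx)⟩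

/-- A homotopy retract, in the category of arrows, of a map with the relative lifting property for
cubes has that property as well. -/
theorem HasCubeLifts.of_homotopy_retract {f : C(Z, Z')} {g : C(P, P')} (hg : HasCubeLifts g)
    (d : C(Z, P)) (d' : C(Z', P')) (i : C(P, Z)) (i' : C(P', Z'))
    (hd : ∀ z, g (d z) = d' (f z)) (hi : ∀ p, f (i p) = i' (g p))
    (Φ : C(Z × I, Z)) (Φ' : C(Z' × I, Z')) (hzero : ∀ z, Φ (z, 0) = z) (hzero' : ∀ z, Φ' (z, 0) = z)
    (hone : ∀ z, Φ (z, 1) = i (d z)) (hone' : ∀ z, Φ' (z, 1) = i' (d' z))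
    (hΦ : ∀ z t, f (Φ (z, t)) = Φ' (f z, t)) : HasCubeLifts f := by
  intro n α β h
  obtain ⟨γ, hγ, hh⟩ := hg n (d.comp α) (d'.comp β) (fun x => by simp [hd, h])
  obtain ⟨γ', hγ', hh'⟩ := exists_lift_of_homotopy f
    (Φ.comp ⟨fun p => (α p.1, p.2), by fun_prop⟩) (Φ'.comp ⟨fun p => (β p.1, p.2), by fun_prop⟩)
    (fun x t => by simp [hΦ, h]) (i.comp γ) (fun x => by simp [hγ, hone]) (by
      convert hh.comp_continuousMap i' using 1
      · ext x; simp [hi]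
      · ext x; simp [hone'])
  refine ⟨γ', fun x => by simp [hγ', hzero], ?_⟩
  convert hh' using 1
  ext x; simp [hzero']

/-- Cancellation of a map with a right homotopy inverse. -/
theorem HasCubeLifts.of_comp {e : C(P, Z)} {f : C(Z, Z')} (h : HasCubeLifts (f.comp e))
    (s : C(Z, P)) (φ : C(Z × I, Z)) (h0 : ∀ z, φ (z, 0) = z) (h1 : ∀ z, φ (z, 1) = e (s z)) :
    HasCubeLifts f := by
  intro n α β hαβ
  let a : C(USph (Fin n → ℝ) × I, Z) := φ.comp ⟨fun p => (α p.1, p.2), by fun_prop⟩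
  obtain ⟨b, hb0, hb⟩ := exists_homotopy_extension β (f.comp a) (fun x => by simp [a, h0, hαβ])
  obtain ⟨γ, hγ, hh⟩ := h n (s.comp α) (b.comp ⟨fun x => (x, 1), by fun_prop⟩)
    (fun x => by simp [hb, a, h1])
  obtain ⟨γ', hγ', hh'⟩ := exists_lift_of_homotopy f a b (fun x t => (hb x t).symm) (e.comp γ)
    (fun x => by simp [hγ, a, h1]) hh
  refine ⟨γ', fun x => by simp [hγ', a, h0], ?_⟩
  convert hh' using 1
  ext x; simp [hb0]

end Formal

section WeakEquiv

variable {Z Z' : Type*} [TopologicalSpace Z] [TopologicalSpace Z']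

theorem pi_norm_eq_one_iff {N : Type*} [Fintype N] {x : N → ℝ} (hx : ‖x‖ ≤ 1) :
    ‖x‖ = 1 ↔ ∃ i, x i = -1 ∨ x i = 1 := by
  have hx' := (pi_norm_le_iff_of_nonneg zero_le_one).1 hx
  constructor
  · intro h
    by_contra! hne
    have : ‖x‖ < 1 := (pi_norm_lt_iff one_pos).2 fun i => by
      refine lt_of_le_of_ne (hx' i) fun h1 => ?_
      rcases (abs_eq zero_le_one).1 h1 with h2 | h2
      · exact (hne i).2 h2
      · exact (hne i).1 h2
    exact this.ne h
  · rintro ⟨i, hi⟩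
    refine le_antisymm hx ?_
    have := norm_le_pi_norm x i
    rcases hi with hi | hi <;> simpa [hi] using this

/-- The homeomorphism from the unit cube to the closed unit ball for the sup norm. -/
noncomputable def cubeHomeomorph (N : Type*) [Fintype N] : (N → I) ≃ₜ UBall (N → ℝ) where
  toFun x := ⟨fun i => 2 * (x i : ℝ) - 1, by
    rw [mem_closedBall_zero_iff, pi_norm_le_iff_of_nonneg zero_le_one]
    intro i
    rw [Real.norm_eq_abs, abs_le]
    constructor <;> linarith [(x i).2.1, (x i).2.2]⟩
  invFun y := fun i => ⟨((y : N → ℝ) i + 1) / 2, by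
    have := (pi_norm_le_iff_of_nonneg zero_le_one).1 y.norm_le_one i
    rw [Real.norm_eq_abs, abs_le] at this
    constructor <;> linarith [this.1, this.2]⟩
  left_inv x := by ext i; simp
  right_inv y := by apply Subtype.ext; ext i; simp; ring
  continuous_toFun := by fun_prop
  continuous_invFun := continuous_pi fun i => Continuous.subtype_mk
    ((((continuous_apply i).comp continuous_subtype_val).add continuous_const).div_const 2) _

theorem cubeHomeomorph_mem_USph {N : Type*} [Fintype N] (x : N → I) :
    cubeHomeomorph N x ∈ USph (N → ℝ) ↔ x ∈ Cube.boundary N := by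
  change ‖(cubeHomeomorph N x : N → ℝ)‖ = 1 ↔ _
  rw [pi_norm_eq_one_iff (cubeHomeomorph N x).norm_le_one]
  refine exists_congr fun i => or_congr ?_ ?_
  · change 2 * (x i : ℝ) - 1 = -1 ↔ _
    rw [← Set.Icc.coe_eq_zero]; constructor <;> intro h <;> linarith
  · change 2 * (x i : ℝ) - 1 = 1 ↔ _
    rw [← Set.Icc.coe_eq_one]; constructor <;> intro h <;> linarith

theorem HasCubeLifts.liftsRel_cube {f : C(Z, Z')} (h : HasCubeLifts f) (n : ℕ) :
    LiftsRel f (Cube.boundary (Fin n)) :=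
  (h n).of_homeomorph (cubeHomeomorph (Fin n)).symm fun x => by
    rw [← cubeHomeomorph_mem_USph, Homeomorph.apply_symm_apply]

end WeakEquiv

section WeakEquivOfLifts

variable {Z Z' : Type*} [TopologicalSpace Z] [TopologicalSpace Z']

theorem consHomeomorph_mem_boundary {m : ℕ} (p : I × (Fin m → I)) :
    consHomeomorph I m p ∈ Cube.boundary (Fin (m + 1)) ↔
      (p.1 = 0 ∨ p.1 = 1) ∨ p.2 ∈ Cube.boundary (Fin m) := by
  change (∃ i, consHomeomorph I m p i = 0 ∨ consHomeomorph I m p i = 1) ↔ _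
  rw [Fin.exists_fin_succ]
  rfl

theorem HasCubeLifts.liftsRel_prism {f : C(Z, Z')} (h : HasCubeLifts f) (m : ℕ) :
    LiftsRel f {p : I × (Fin m → I) | (p.1 = 0 ∨ p.1 = 1) ∨ p.2 ∈ Cube.boundary (Fin m)} :=
  (h.liftsRel_cube (m + 1)).of_homeomorph (consHomeomorph I m).symm fun x => by
    rw [Set.mem_ofPred_eq, ← consHomeomorph_mem_boundary, Homeomorph.apply_symm_apply]

theorem HasCubeLifts.homotopicRel_of_comp {f : C(Z, Z')} (h : HasCubeLifts f) {m : ℕ}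
    {p q : C(Fin m → I, Z)} (hpq : ∀ y ∈ Cube.boundary (Fin m), p y = q y)
    (hH : (f.comp p).HomotopicRel (f.comp q) (Cube.boundary (Fin m))) :
    p.HomotopicRel q (Cube.boundary (Fin m)) := by
  rw [homotopicRel_iff] at hH ⊢
  obtain ⟨H, h0, h1, hS⟩ := hH
  let S : Set (I × (Fin m → I)) := {p | (p.1 = 0 ∨ p.1 = 1) ∨ p.2 ∈ Cube.boundary (Fin m)}
  obtain ⟨α, hα1, hα2⟩ := exists_glue (K := S) (P := {x | (x.1.1 : ℝ) ≤ 1 / 2})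
    (Q := {x | 1 / 2 ≤ (x.1.1 : ℝ)}) (isClosed_le (by fun_prop) (by fun_prop))
    (isClosed_le (by fun_prop) (by fun_prop)) (fun x => le_total (α := ℝ) _ _)
    (p.comp ⟨fun x => x.1.1.2, by fun_prop⟩) (q.comp ⟨fun x => x.1.1.2, by fun_prop⟩) (by
      rintro ⟨⟨t, y⟩, hx⟩ hp hq
      have ht : (t : ℝ) = 1 / 2 := le_antisymm hp hq
      rcases hx with (hx | hx) | hx
      · simp only at hx; subst hx; norm_num at ht
      · simp only at hx; subst hx; norm_num at ht
      · exact hpq y hx)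
  obtain ⟨γ, hγ, -⟩ := h.liftsRel_prism m α H (by
    rintro ⟨⟨t, y⟩, hx⟩
    rcases hx with (hx | hx) | hx
    · simp only at hx
      subst hx
      rw [hα1 _ (by simp)]
      exact (h0 y).symm
    · simp only at hx
      subst hx
      rw [hα2 _ (by norm_num)]
      exact (h1 y).symm
    · rcases le_total (t : ℝ) (1 / 2) with ht | ht
      · rw [hα1 _ ht]
        exact (hS t y hx).symm
      · rw [hα2 _ ht]
        exact (congrArg f (hpq y hx)).symm.trans (hS t y hx).symm)
  refine ⟨γ, fun x => ?_, fun x => ?_, fun t x hx => ?_⟩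
  · exact (hγ ⟨(0, x), .inl (.inl rfl)⟩).trans (hα1 _ (by simp))
  · exact (hγ ⟨(1, x), .inl (.inr rfl)⟩).trans (hα2 _ (by norm_num))
  · rcases le_total (t : ℝ) (1 / 2) with ht | ht
    · exact (hγ ⟨(t, x), .inr hx⟩).trans (hα1 _ ht)
    · exact ((hγ ⟨(t, x), .inr hx⟩).trans (hα2 _ ht)).trans (hpq x hx).symm

theorem HasCubeLifts.isWeakHomotopyEquiv {f : C(Z, Z')} (h : HasCubeLifts f) :
    IsWeakHomotopyEquiv f := by
  have hbd : Cube.boundary (Fin 0) = ∅ := by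
    ext y; simp [Cube.boundary]
  refine ⟨⟨?_, ?_⟩, fun n x => ⟨?_, ?_⟩⟩
  · intro a b
    refine Quotient.inductionOn₂' a b fun z z' hzz => ?_
    obtain ⟨c⟩ : Joined (f z) (f z') := Quotient.exact hzz
    have := h.homotopicRel_of_comp (m := 0) (p := .const _ z) (q := .const _ z')
      (by simp [hbd]) ((homotopicRel_iff).2 ⟨c.toContinuousMap.comp .fst,
        fun x => c.source, fun x => c.target, by simp [hbd]⟩)
    obtain ⟨F, hF0, hF1, -⟩ := homotopicRel_iff.1 this
    exact Quotient.sound ⟨⟨F.comp ⟨fun t => (t, 0), by fun_prop⟩, hF0 0, hF1 0⟩⟩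
  · intro b
    refine Quotient.inductionOn' b fun z' => ?_
    obtain ⟨γ, -, hγ⟩ := h.liftsRel_cube 0
      ⟨fun x => by have := x.2; simp [hbd] at this, by
        rw [continuous_iff_continuousAt]; intro x; have := x.2; simp [hbd] at this⟩
      (.const _ z') (fun x => by have := x.2; simp [hbd] at this)
    obtain ⟨F, hF0, hF1, -⟩ := homotopicRel_iff.1 hγ
    exact ⟨Quotient.mk (pathSetoid Z) (γ 0), Quotient.sound
      ⟨⟨F.comp ⟨fun t => (t, 0), by fun_prop⟩, hF0 0, hF1 0⟩⟩⟩
  · intro a b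
    refine Quotient.inductionOn₂' a b fun p q hpq => ?_
    have hpq' : GenLoop.Homotopic (inducedGenLoop f p) (inducedGenLoop f q) := Quotient.exact hpq
    exact Quotient.sound (h.homotopicRel_of_comp (p := p.1) (q := q.1)
      (fun y hy => (p.2 y hy).trans (q.2 y hy).symm) hpq')
  · intro b
    refine Quotient.inductionOn' b fun q => ?_
    obtain ⟨γ, hγ, hh⟩ := h.liftsRel_cube n (.const _ x) q.1 (fun y => (q.2 y y.2).symm)
    exact ⟨Quotient.mk' ⟨γ, fun y hy => hγ ⟨y, hy⟩⟩, Quotient.sound hh⟩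

end WeakEquivOfLifts

section LiftsOfWeakEquiv

variable {Z Z' : Type*} [TopologicalSpace Z'] [TopologicalSpace Z]

/-- The homeomorphism from a prism over the unit cube to the closed unit ball for the sup norm. -/
noncomputable def prismHomeomorph (m : ℕ) : (I × (Fin m → I)) ≃ₜ UBall (ℝ × (Fin m → ℝ)) where
  toFun p := ⟨(1 - 2 * (p.1 : ℝ), (cubeHomeomorph (Fin m) p.2 : Fin m → ℝ)), by
    rw [mem_closedBall_zero_iff, Prod.norm_def]
    refine max_le ?_ (cubeHomeomorph (Fin m) p.2).norm_le_one
    rw [Real.norm_eq_abs, abs_le]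
    constructor <;> linarith [p.1.2.1, p.1.2.2]⟩
  invFun y := (⟨(1 - (y : ℝ × (Fin m → ℝ)).1) / 2, by
      have := (norm_fst_le _).trans y.norm_le_one
      rw [Real.norm_eq_abs, abs_le] at this
      constructor <;> linarith [this.1, this.2]⟩,
    (cubeHomeomorph (Fin m)).symm ⟨(y : ℝ × (Fin m → ℝ)).2,
      mem_closedBall_zero_iff.2 ((norm_snd_le _).trans y.norm_le_one)⟩)
  left_inv p := by
    refine Prod.ext (Subtype.ext ?_) ?_
    · simp
    · simp
  right_inv y := by
    apply Subtype.ext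
    refine Prod.ext ?_ ?_
    · simp; ring
    · simp
  continuous_toFun := by
    have := (cubeHomeomorph (Fin m)).continuous
    fun_prop
  continuous_invFun := by
    have := (cubeHomeomorph (Fin m)).symm.continuous
    fun_prop

theorem prismHomeomorph_mem_USph {m : ℕ} (p : I × (Fin m → I)) :
    prismHomeomorph m p ∈ USph (ℝ × (Fin m → ℝ)) ↔
      (p.1 = 0 ∨ p.1 = 1) ∨ p.2 ∈ Cube.boundary (Fin m) := by
  have h1 : ‖1 - 2 * (p.1 : ℝ)‖ ≤ 1 := by
    rw [Real.norm_eq_abs, abs_le]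
    constructor <;> linarith [p.1.2.1, p.1.2.2]
  have h2 := (cubeHomeomorph (Fin m) p.2).norm_le_one
  change max ‖1 - 2 * (p.1 : ℝ)‖ ‖(cubeHomeomorph (Fin m) p.2 : Fin m → ℝ)‖ = 1 ↔ _
  have h3 : ‖1 - 2 * (p.1 : ℝ)‖ = 1 ↔ p.1 = 0 ∨ p.1 = 1 := by
    rw [Real.norm_eq_abs, abs_eq zero_le_one, ← Set.Icc.coe_eq_zero, ← Set.Icc.coe_eq_one]
    refine or_congr ?_ ?_ <;> constructor <;> intro h <;> linarith
  rw [← h3, ← cubeHomeomorph_mem_USph]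
  change _ ↔ _ ∨ ‖(cubeHomeomorph (Fin m) p.2 : Fin m → ℝ)‖ = 1
  constructor
  · intro h
    rcases max_choice ‖1 - 2 * (p.1 : ℝ)‖ ‖(cubeHomeomorph (Fin m) p.2 : Fin m → ℝ)‖ with h' | h'
    · exact .inl (h' ▸ h)
    · exact .inr (h' ▸ h)
  · rintro (h | h)
    · rw [h]; exact max_eq_left h2
    · rw [h]; exact max_eq_right h1

/-- The sphere deforms to itself so that everything but the interior of the top face is
collapsed to a point. -/
theorem exists_collapse (m : ℕ) :
    ∃ (c : C(USph (ℝ × (Fin m → ℝ)) × I, USph (ℝ × (Fin m → ℝ)))) (e : USph (ℝ × (Fin m → ℝ))),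
      (∀ v, c (v, 0) = v) ∧
      ∀ (p : I × (Fin m → I)) (hp : prismHomeomorph m p ∈ USph (ℝ × (Fin m → ℝ))),
        (p.1 = 1 ∨ p.2 ∈ Cube.boundary (Fin m)) → c (⟨prismHomeomorph m p, hp⟩, 1) = e := by
  let lam : (ℝ × (Fin m → ℝ)) → ℝ := fun v => max ‖v.2‖ ((1 - v.1) / 2)
  let w : (ℝ × (Fin m → ℝ)) → ℝ → (ℝ × (Fin m → ℝ)) := fun v t =>
    (1 - t * lam v) • v - (t * lam v) • ((1, 0) : (ℝ × (Fin m → ℝ)))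
  have hw : ∀ (v : USph (ℝ × (Fin m → ℝ))) (t : ℝ), 0 < ‖w (v : UBall (ℝ × (Fin m → ℝ))) t‖ := by
    intro v t
    rw [norm_pos_iff]
    intro h0
    obtain ⟨⟨⟨y, x⟩, hb⟩, hv⟩ := v
    have hv : max ‖y‖ ‖x‖ = 1 := hv
    have h1 : (1 - t * lam (y, x)) * y - t * lam (y, x) = 0 := by
      simpa [w] using congrArg Prod.fst h0
    have h2 : (1 - t * lam (y, x)) • x = 0 := by
      simpa [w] using congrArg Prod.snd h0
    rcases smul_eq_zero.1 h2 with h3 | h3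
    · rw [h3] at h1; linarith
    · subst h3
      rw [norm_zero, max_eq_left (norm_nonneg _), Real.norm_eq_abs, abs_eq zero_le_one] at hv
      rcases hv with rfl | rfl
      · simp [lam] at h1
      · linarith
  have hwc : Continuous fun p : USph (ℝ × (Fin m → ℝ)) × I =>
      w (p.1 : UBall (ℝ × (Fin m → ℝ))) p.2 := by
    simp only [w, lam]; fun_prop
  have he : ‖((-1, 0) : (ℝ × (Fin m → ℝ)))‖ = 1 := by simp [Prod.norm_def]
  refine ⟨⟨fun p => toUSph (w (p.1 : UBall (ℝ × (Fin m → ℝ))) p.2) (hw _ _),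
    continuous_toUSph hwc _⟩,
    ⟨⟨(-1, 0), mem_closedBall_zero_iff.2 he.le⟩, he⟩, fun v => ?_, fun p hp h => ?_⟩
  · have h1 : w (v : UBall (ℝ × (Fin m → ℝ))) ((0 : I) : ℝ) = (v : UBall (ℝ × (Fin m → ℝ))) := by
      simp [w]
    have h2 : 0 < ‖((v : UBall (ℝ × (Fin m → ℝ))) : (ℝ × (Fin m → ℝ)))‖ := h1 ▸ hw v _
    have h3 : toUSph (w (v : UBall (ℝ × (Fin m → ℝ))) ((0 : I) : ℝ)) (hw _ _) =
        toUSph ((v : UBall (ℝ × (Fin m → ℝ))) : (ℝ × (Fin m → ℝ))) h2 := by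
      congr 1
    exact h3.trans (toUSph_of_mem _ v.2 _)
  · have hlam : lam (prismHomeomorph m p) = 1 := by
      have h1 := (cubeHomeomorph (Fin m) p.2).norm_le_one
      have h2 : (1 - (1 - 2 * (p.1 : ℝ))) / 2 = p.1 := by ring
      change max ‖(cubeHomeomorph (Fin m) p.2 : Fin m → ℝ)‖ ((1 - (1 - 2 * (p.1 : ℝ))) / 2) = 1
      rw [h2]
      rcases h with h | h
      · rw [h]; exact max_eq_right h1
      · rw [(cubeHomeomorph_mem_USph p.2).2 h]
        exact max_eq_left p.1.2.2
    have h1 : w (prismHomeomorph m p) ((1 : I) : ℝ) = (-1, 0) := by simp [w, hlam]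
    apply Subtype.ext; apply Subtype.ext
    change ‖w (prismHomeomorph m p) ((1 : I) : ℝ)‖⁻¹ • w (prismHomeomorph m p) ((1 : I) : ℝ) = _
    rw [h1]
    simp only [he, inv_one, one_smul]

theorem exists_extension_of_injective {f : C(Z, Z')} {m : ℕ}
    (hf : ∀ z, Function.Injective (inducedHomotopyGroup (Fin m) f z))
    (α : C(USph (ℝ × (Fin m → ℝ)), Z)) (β : C(UBall (ℝ × (Fin m → ℝ)), Z'))
    (h : ∀ x : USph (ℝ × (Fin m → ℝ)), f (α x) = β x) :
    ∃ γ : C(UBall (ℝ × (Fin m → ℝ)), Z), ∀ x : USph (ℝ × (Fin m → ℝ)), γ x = α x := by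
  obtain ⟨c, e, hc0, hc1⟩ := exists_collapse m
  obtain ⟨b, -, hb⟩ := exists_homotopy_extension β (f.comp (α.comp c))
    (fun x => by simp [hc0, h])
  have htop : ∀ u : Fin m → I, prismHomeomorph m (0, u) ∈ USph (ℝ × (Fin m → ℝ)) :=
    fun u => (prismHomeomorph_mem_USph _).2 (.inl (.inl rfl))
  have hpr := (prismHomeomorph m).continuous
  let p : GenLoop (Fin m) Z (α e) :=
    ⟨α.comp (c.comp ⟨fun u => (⟨prismHomeomorph m (0, u), htop u⟩, 1), by fun_prop⟩),
      fun u hu => congrArg α (hc1 (0, u) (htop u) (.inr hu))⟩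
  have hp : GenLoop.Homotopic (inducedGenLoop f p) (inducedGenLoop f GenLoop.const) := by
    have hmem : ∀ q (hq : (q.1 = 0 ∨ q.1 = 1) ∨ q.2 ∈ Cube.boundary (Fin m)),
        b (prismHomeomorph m q, 1) =
          f (α (c (⟨prismHomeomorph m q, (prismHomeomorph_mem_USph q).2 hq⟩, 1))) :=
      fun q hq => hb ⟨prismHomeomorph m q, (prismHomeomorph_mem_USph q).2 hq⟩ 1
    refine homotopicRel_iff.2 ⟨b.comp ⟨fun q => (prismHomeomorph m q, 1), by fun_prop⟩,
      fun u => hmem (0, u) (.inl (.inl rfl)), fun u => ?_, fun t u hu => ?_⟩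
    · exact (hmem (1, u) (.inl (.inr rfl))).trans (by rw [hc1 _ _ (.inl rfl)]; rfl)
    · refine (hmem (t, u) (.inr hu)).trans ?_
      rw [hc1 _ _ (.inr hu)]
      exact congrArg f (p.2 u hu).symm
  have hp' : GenLoop.Homotopic p GenLoop.const :=
    Quotient.exact (hf (α e) (a₁ := Quotient.mk' p) (a₂ := Quotient.mk' GenLoop.const)
      (Quotient.sound hp))
  obtain ⟨G, hG0, hG1, hGS⟩ := homotopicRel_iff.1 hp'
  obtain ⟨γ, hγ⟩ := exists_extension_of_homotopy (α.comp c)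
    (G.comp ⟨(prismHomeomorph m).symm, (prismHomeomorph m).symm.continuous⟩) (by
      rintro ⟨x, hx⟩
      obtain ⟨⟨t, u⟩, rfl⟩ := (prismHomeomorph m).surjective x
      simp only [ContinuousMap.comp_apply, ContinuousMap.coe_mk, Homeomorph.symm_apply_apply]
      rcases (prismHomeomorph_mem_USph _).1 hx with (h0 | h1) | h2
      · simp only at h0
        subst h0
        exact hG0 u
      · simp only at h1
        subst h1
        rw [hc1 _ _ (.inl rfl)]
        exact hG1 u
      · rw [hc1 _ _ (.inr h2)]
        exact (hGS t u h2).trans (p.2 u h2))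
  exact ⟨γ, fun x => by simp [hγ, hc0]⟩

theorem exists_lift_of_extension {f : C(Z, Z')} {n : ℕ}
    (hf : ∀ z, Function.Surjective (inducedHomotopyGroup (Fin n) f z))
    (γ : C(UBall (Fin n → ℝ), Z)) (β : C(UBall (Fin n → ℝ), Z'))
    (h : ∀ x : USph (Fin n → ℝ), f (γ x) = β x) :
    ∃ γ' : C(UBall (Fin n → ℝ), Z), (∀ x : USph (Fin n → ℝ), γ' x = γ x) ∧
      (f.comp γ').HomotopicRel β (USph (Fin n → ℝ)) := by
  let E := Fin n → ℝ
  have hmem : ∀ (x : UBall E) (t : I), (1 - (t : ℝ)) • (x : E) ∈ Metric.closedBall (0 : E) 1 := by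
    intro x t
    rw [mem_closedBall_zero_iff, norm_smul, Real.norm_of_nonneg (by linarith [t.2.2])]
    exact mul_le_one₀ (by linarith [t.2.1]) (norm_nonneg _) x.norm_le_one
  let a : C(USph E × I, Z) := γ.comp ⟨fun p => ⟨(1 - (p.2 : ℝ)) • ((p.1 : UBall E) : E),
    hmem _ _⟩, by fun_prop⟩
  let o : UBall E := ⟨0, by simp⟩
  have ha0 : ∀ x, a (x, 0) = γ x := fun x => by simp [a]
  have ha1 : ∀ x, a (x, 1) = γ o := fun x => by simp [a, o]
  obtain ⟨b, hb0, hb⟩ := exists_homotopy_extension β (f.comp a) (fun x => by simp [ha0, h])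
  have hcube := (cubeHomeomorph (Fin n)).continuous
  let q : GenLoop (Fin n) Z' (f (γ o)) :=
    ⟨b.comp ⟨fun u => (cubeHomeomorph (Fin n) u, 1), by fun_prop⟩, fun u hu =>
      (hb ⟨_, (cubeHomeomorph_mem_USph u).2 hu⟩ 1).trans (congrArg f (ha1 _))⟩
  obtain ⟨p, hp⟩ := hf (γ o) (Quotient.mk' q)
  induction p using Quotient.inductionOn' with | _ p
  have hpq : GenLoop.Homotopic (inducedGenLoop f p) q := Quotient.exact hp
  obtain ⟨F, hF0, hF1, hFS⟩ := homotopicRel_iff.1 hpq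
  have hcube' := (cubeHomeomorph (Fin n)).symm.continuous
  have hbd : ∀ x ∈ USph E, (cubeHomeomorph (Fin n)).symm x ∈ Cube.boundary (Fin n) := by
    intro x hx
    rwa [← cubeHomeomorph_mem_USph, Homeomorph.apply_symm_apply]
  obtain ⟨γ', hγ', hh⟩ := exists_lift_of_homotopy f a b (fun x t => (hb x t).symm)
    (p.1.comp ⟨_, hcube'⟩) (fun x => (p.2 _ (hbd x x.2)).trans (ha1 x).symm)
    (homotopicRel_iff.2 ⟨F.comp ⟨fun y => (y.1, (cubeHomeomorph (Fin n)).symm y.2), by fun_prop⟩,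
      fun x => hF0 _, fun x => (hF1 _).trans (by simp [q]), fun t x hx => hFS t _ (hbd x hx)⟩)
  refine ⟨γ', fun x => (hγ' x).trans (ha0 x), ?_⟩
  convert hh using 1
  ext x; simp [hb0]

theorem IsWeakHomotopyEquiv.hasCubeLifts {f : C(Z, Z')} (hf : IsWeakHomotopyEquiv f) :
    HasCubeLifts f := by
  rintro (_ | m)
  · intro α β h
    obtain ⟨z, hz⟩ := hf.1.2 (Quotient.mk (pathSetoid Z') (β 0))
    induction z using Quotient.inductionOn' with | _ z
    obtain ⟨c⟩ : Joined (f z) (β 0) := Quotient.exact hz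
    have hS : ∀ x : UBall (Fin 0 → ℝ), x ∉ USph (Fin 0 → ℝ) := by
      intro x hx
      have h1 : ‖(x : Fin 0 → ℝ)‖ = 1 := hx
      rw [Subsingleton.elim (x : Fin 0 → ℝ) 0, norm_zero] at h1
      exact zero_ne_one h1
    exact ⟨.const _ z, fun x => (hS x x.2).elim, homotopicRel_iff.2 ⟨c.toContinuousMap.comp .fst,
      fun x => c.source, fun x => c.target.trans (congrArg β (Subsingleton.elim _ _)),
      fun t x hx => (hS x hx).elim⟩⟩
  · intro α β h
    let e : UBall (ℝ × (Fin m → ℝ)) ≃ₜ UBall (Fin (m + 1) → ℝ) :=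
      (consHomeomorph ℝ m).subtype fun x => by
        rw [mem_closedBall_zero_iff, mem_closedBall_zero_iff, norm_consHomeomorph]
    have he : ∀ x, x ∈ USph (ℝ × (Fin m → ℝ)) ↔ e x ∈ USph (Fin (m + 1) → ℝ) := fun x => by
      change ‖(x : ℝ × (Fin m → ℝ))‖ = 1 ↔ ‖consHomeomorph ℝ m x‖ = 1
      rw [norm_consHomeomorph]
    obtain ⟨γ, hγ⟩ := exists_extension_of_injective (fun z => (hf.2 m z).1)
      (α.comp ⟨fun x => ⟨e x, (he x).1 x.2⟩, by fun_prop⟩) (β.comp ⟨e, e.continuous⟩)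
      (fun x => h _)
    have hγ' : ∀ x : USph (Fin (m + 1) → ℝ), γ (e.symm x) = α x := fun x => by
      have := hγ ⟨e.symm x, by rw [he, e.apply_symm_apply]; exact x.2⟩
      simpa using this
    obtain ⟨γ', h1, h2⟩ := exists_lift_of_extension (fun z => (hf.2 (m + 1) z).2)
      (γ.comp ⟨e.symm, e.symm.continuous⟩) β (fun x => by simp [hγ', h])
    exact ⟨γ', fun x => (h1 x).trans (hγ' x), h2⟩

end LiftsOfWeakEquiv

section LocalLifts

variable {Z Z' : Type*} [TopologicalSpace Z'] [TopologicalSpace Z]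

/-- Extension over the ball of a lift up to a homotopy parametrised by the real line, inside a
subset over which relative lifting problems are solvable. -/
theorem exists_moore_extension {E : Type*} [NormedAddCommGroup E] [NormedSpace ℝ E] (f : C(Z, Z'))
    {W : Set Z'} (hW : LiftsRel (f.restrictPreimage W) (USph E)) (a : C(USph E, Z))
    (h : C(USph E × ℝ, Z')) (β : C(UBall E, Z')) {T : ℝ} (hT : 0 < T) (hβ : ∀ x, β x ∈ W)
    (hhW : ∀ p, h p ∈ W) (h0 : ∀ (x : USph E), ∀ t ≤ 0, h (x, t) = β x)
    (h1 : ∀ (x : USph E) t, T ≤ t → h (x, t) = f (a x)) :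
    ∃ (c : C(UBall E, Z)) (k : C(UBall E × ℝ, Z')), (∀ x : USph E, c x = a x) ∧
      (∀ (x : USph E) t, k (x, t) = h (x, t)) ∧ (∀ p, k p ∈ W) ∧
      (∀ x, ∀ t ≤ 0, k (x, t) = β x) ∧ ∀ x t, T + 1 ≤ t → k (x, t) = f (c x) := by
  obtain ⟨b, hb0, hb⟩ := exists_homotopy_extension (Z := W)
    ⟨fun x => ⟨β x, hβ x⟩, by fun_prop⟩
    ⟨fun p => ⟨h (p.1, T * (p.2 : ℝ)), hhW _⟩, by fun_prop⟩
    (fun x => Subtype.ext (by simp [h0 x 0 le_rfl]))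
  have haW : ∀ x, a x ∈ f ⁻¹' W := fun x => by
    have := hhW (x, T)
    rwa [h1 x T le_rfl] at this
  obtain ⟨γ, hγ, hH⟩ := hW ⟨fun x => ⟨a x, haW x⟩, by fun_prop⟩
    (b.comp ⟨fun x => (x, 1), by fun_prop⟩) (fun x => Subtype.ext (by simp [hb, h1 x T le_rfl]))
  obtain ⟨F, hF0, hF1, hFS⟩ := homotopicRel_iff.1 hH
  have hγ' : ∀ x : USph E, (γ x : Z) = a x := fun x => congrArg Subtype.val (hγ x)
  obtain ⟨w, hw1, hw2⟩ := exists_glue (K := UBall E × ℝ) (P := {p | p.2 ≤ T}) (Q := {p | T ≤ p.2})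
    (isClosed_le (by fun_prop) (by fun_prop)) (isClosed_le (by fun_prop) (by fun_prop))
    (fun p => le_total (α := ℝ) _ _)
    (b.comp ⟨fun p => (p.1.1, Set.projIcc 0 1 zero_le_one (p.1.2 / T)),
      (by fun_prop : Continuous _).prodMk (continuous_projIcc.comp (by fun_prop))⟩)
    (F.comp ⟨fun p => (Set.projIcc 0 1 zero_le_one (1 - (p.1.2 - T)), p.1.1),
      (continuous_projIcc.comp (by fun_prop)).prodMk (by fun_prop)⟩) (by
      rintro ⟨x, t⟩ hp hq
      obtain rfl : t = T := le_antisymm hp hq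
      simp only [ContinuousMap.comp_apply, ContinuousMap.coe_mk, sub_self, sub_zero,
        div_self hT.ne']
      rw [Set.projIcc_of_right_le _ le_rfl]
      exact (hF1 x).symm)
  refine ⟨⟨fun x => γ x, by fun_prop⟩, ⟨fun p => w p, by fun_prop⟩, hγ', fun x t => ?_,
    fun p => (w p).2, fun x t ht => ?_, fun x t ht => ?_⟩
  · simp only [ContinuousMap.coe_mk]
    rcases le_total t T with ht | ht
    · rw [hw1 _ ht]
      simp only [ContinuousMap.comp_apply, ContinuousMap.coe_mk, hb]
      rcases le_total t 0 with ht0 | ht0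
      · rw [Set.projIcc_of_le_left _ (div_nonpos_of_nonpos_of_nonneg ht0 hT.le)]
        simp [h0 x 0 le_rfl, h0 x t ht0]
      · rw [Set.projIcc_of_mem _ ⟨div_nonneg ht0 hT.le, (div_le_one hT).2 ht⟩]
        simp [mul_div_cancel₀ _ hT.ne']
    · rw [hw2 _ ht, h1 x t ht]
      simp only [ContinuousMap.comp_apply, ContinuousMap.coe_mk]
      rw [hFS _ _ x.2]
      exact congrArg f (hγ' x)
  · simp only [ContinuousMap.coe_mk]
    rw [hw1 _ (ht.trans hT.le)]
    simp only [ContinuousMap.comp_apply, ContinuousMap.coe_mk]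
    rw [Set.projIcc_of_le_left _ (div_nonpos_of_nonpos_of_nonneg ht hT.le)]
    exact congrArg Subtype.val (hb0 x)
  · simp only [ContinuousMap.coe_mk]
    rw [hw2 _ (show T ≤ t by linarith)]
    simp only [ContinuousMap.comp_apply, ContinuousMap.coe_mk]
    rw [Set.projIcc_of_le_left _ (by linarith)]
    exact congrArg Subtype.val (hF0 x)

end LocalLifts

section Grid

variable {n : ℕ}

/-- The box with integral corners `a` and `b`. -/
def gridBox (a b : Fin n → ℤ) : Set (Fin n → ℝ) := {x | ∀ i, (a i : ℝ) ≤ x i ∧ x i ≤ b i}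

/-- The relative boundary of a box, where directions of length zero are ignored. -/
def gridBoundary (a b : Fin n → ℤ) : Set (Fin n → ℝ) :=
  {x | x ∈ gridBox a b ∧ ∃ i, a i < b i ∧ (x i = a i ∨ x i = b i)}

theorem isClosed_gridBox (a b : Fin n → ℤ) : IsClosed (gridBox a b) := by
  have : gridBox a b = ⋂ i, {x : Fin n → ℝ | (a i : ℝ) ≤ x i ∧ x i ≤ b i} := by
    ext x; simp [gridBox]
  rw [this]
  exact isClosed_iInter fun i => (isClosed_le continuous_const (continuous_apply i)).inter
    (isClosed_le (continuous_apply i) continuous_const)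

theorem isClosed_gridBoundary (a b : Fin n → ℤ) : IsClosed (gridBoundary a b) := by
  have : gridBoundary a b =
      gridBox a b ∩ ⋃ i ∈ {i | a i < b i}, ({x | x i = a i} ∪ {x | x i = b i}) := by
    ext x; simp [gridBoundary]
  rw [this]
  exact (isClosed_gridBox a b).inter (Set.Finite.isClosed_biUnion (Set.toFinite _) fun i _ =>
    (isClosed_eq (continuous_apply i) continuous_const).union
      (isClosed_eq (continuous_apply i) continuous_const))

/-- The number of unit steps needed to fill a box. -/
def gridSize (a b : Fin n → ℤ) : ℕ := ∑ i, (b i - a i).toNat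

theorem gridSize_lt {a b a' b' : Fin n → ℤ} (hab : ∀ j, (b' j - a' j).toNat ≤ (b j - a j).toNat)
    (i : Fin n) (hi : (b' i - a' i).toNat < (b i - a i).toNat) : gridSize a' b' < gridSize a b :=
  Finset.sum_lt_sum (fun j _ => hab j) ⟨i, Finset.mem_univ i, hi⟩

variable {Z Z' : Type*} [TopologicalSpace Z'] [TopologicalSpace Z]

/-- A lift of `β` through `f` on the set `K`, up to a homotopy that is parametrised by the real
line, stationary outside a bounded interval, and constrained at each point `x` to `R x`. -/
structure IsPartialLift (f : C(Z, Z')) (β : (Fin n → ℝ) → Z') (R : (Fin n → ℝ) → Set Z')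
    (K : Set (Fin n → ℝ)) (s : (Fin n → ℝ) → Z × C(ℝ, Z')) : Prop where
  continuousOn : ContinuousOn s K
  stationary : ∃ T : ℝ, ∀ x ∈ K, (∀ t ≤ 0, (s x).2 t = β x) ∧ ∀ t, T ≤ t → (s x).2 t = f (s x).1
  mem : ∀ x ∈ K, ∀ t, (s x).2 t ∈ R x

namespace IsPartialLift

variable {f : C(Z, Z')} {β : (Fin n → ℝ) → Z'} {R : (Fin n → ℝ) → Set Z'}
  {K K' : Set (Fin n → ℝ)} {s s' : (Fin n → ℝ) → Z × C(ℝ, Z')}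

theorem mono (h : IsPartialLift f β R K s) (hK : K' ⊆ K) : IsPartialLift f β R K' s :=
  ⟨h.continuousOn.mono hK, h.stationary.imp fun _ hT x hx => hT x (hK hx),
    fun x hx => h.mem x (hK hx)⟩

theorem congr (h : IsPartialLift f β R K s) (hs : Set.EqOn s' s K) : IsPartialLift f β R K s' :=
  ⟨h.continuousOn.congr hs, h.stationary.imp fun _ hT x hx => by rw [hs hx]; exact hT x hx,
    fun x hx => by rw [hs hx]; exact h.mem x hx⟩

theorem union (h : IsPartialLift f β R K s) (h' : IsPartialLift f β R K' s) (hK : IsClosed K)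
    (hK' : IsClosed K') : IsPartialLift f β R (K ∪ K') s := by
  obtain ⟨T, hT⟩ := h.stationary
  obtain ⟨T', hT'⟩ := h'.stationary
  refine ⟨h.continuousOn.union_of_isClosed h'.continuousOn hK hK', ⟨max T T', ?_⟩, ?_⟩
  · rintro x (hx | hx)
    · exact ⟨(hT x hx).1, fun t ht => (hT x hx).2 t ((le_max_left _ _).trans ht)⟩
    · exact ⟨(hT' x hx).1, fun t ht => (hT' x hx).2 t ((le_max_right _ _).trans ht)⟩
  · rintro x (hx | hx)
    · exact h.mem x hx
    · exact h'.mem x hx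

theorem exists_union (h : IsPartialLift f β R K s) (h' : IsPartialLift f β R K' s')
    (hK : IsClosed K) (hK' : IsClosed K') (hs : Set.EqOn s s' (K ∩ K')) :
    ∃ s'', IsPartialLift f β R (K ∪ K') s'' ∧ Set.EqOn s'' s K ∧ Set.EqOn s'' s' K' := by
  classical
  have h1 : Set.EqOn (K.piecewise s s') s K := Set.piecewise_eqOn _ _ _
  have h2 : Set.EqOn (K.piecewise s s') s' K' := fun x hx => by
    by_cases hxK : x ∈ K
    · rw [Set.piecewise_eq_of_mem _ _ _ hxK, hs ⟨hxK, hx⟩]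
    · rw [Set.piecewise_eq_of_notMem _ _ _ hxK]
  exact ⟨K.piecewise s s', (h.congr h1).union (h'.congr h2) hK hK', h1, h2⟩

end IsPartialLift

/-- Extension of partial lifts over a cell of the unit grid. -/
theorem IsPartialLift.exists_extension_cell {f : C(Z, Z')} {β : (Fin n → ℝ) → Z'}
    {R : (Fin n → ℝ) → Set Z'} {a b : Fin n → ℤ} {s : (Fin n → ℝ) → Z × C(ℝ, Z')}
    (hβ : Continuous β) (hab : ∀ i, a i ≤ b i) (hab' : ∀ i, b i ≤ a i + 1) {W : Set Z'}
    (hW : HasCubeLifts (f.restrictPreimage W)) (hβW : ∀ x ∈ gridBox a b, β x ∈ W)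
    (hRW : ∀ x ∈ gridBoundary a b, R x ⊆ W)
    (hWR : ∀ x ∈ gridBox a b, x ∉ gridBoundary a b → W ⊆ R x)
    (hs : IsPartialLift f β R (gridBoundary a b) s) :
    ∃ s', IsPartialLift f β R (gridBox a b) s' ∧ Set.EqOn s' s (gridBoundary a b) := by
  classical
  let N := {i // a i < b i}
  have hb : ∀ i : N, b i = a i + 1 := fun i => le_antisymm (hab' i) (Int.add_one_le_iff.2 i.2)
  have hb' : ∀ i, ¬ a i < b i → b i = a i := fun i hi => le_antisymm (not_lt.1 hi) (hab i)
  let φ : (N → ℝ) → Fin n → ℝ := fun y i =>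
    if hi : a i < b i then a i + (y ⟨i, hi⟩ + 1) / 2 else a i
  let ψ : (Fin n → ℝ) → N → ℝ := fun x i => 2 * (x i - a i) - 1
  have hφ : Continuous φ := continuous_pi fun i => by
    by_cases hi : a i < b i <;> simp only [φ, hi, dif_pos, dif_neg, not_false_eq_true] <;> fun_prop
  have hψ : Continuous ψ := by fun_prop
  have hφψ : ∀ x ∈ gridBox a b, φ (ψ x) = x := by
    intro x hx
    ext i
    by_cases hi : a i < b i
    · simp only [φ, ψ, hi, dif_pos]; ring
    · have := hx i
      rw [hb' i hi] at this
      simp only [φ, hi, dif_neg, not_false_eq_true]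
      exact le_antisymm this.1 this.2
  have hψmem : ∀ x ∈ gridBox a b, ψ x ∈ Metric.closedBall (0 : N → ℝ) 1 := by
    intro x hx
    rw [mem_closedBall_zero_iff, pi_norm_le_iff_of_nonneg zero_le_one]
    intro i
    have h1 := hx i
    rw [hb i] at h1
    push_cast at h1
    rw [Real.norm_eq_abs, abs_le]
    constructor <;> simp only [ψ] <;> linarith [h1.1, h1.2]
  have hφmem : ∀ y : UBall (N → ℝ), φ y ∈ gridBox a b := by
    intro y i
    by_cases hi : a i < b i
    · have h1 := (pi_norm_le_iff_of_nonneg zero_le_one).1 y.norm_le_one ⟨i, hi⟩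
      rw [Real.norm_eq_abs, abs_le] at h1
      have h2 := hb ⟨i, hi⟩
      simp only at h2
      have h3 : φ y i = a i + ((y : N → ℝ) ⟨i, hi⟩ + 1) / 2 := dif_pos hi
      rw [h3, h2]
      push_cast
      constructor <;> linarith [h1.1, h1.2]
    · have h3 : φ y i = a i := dif_neg hi
      rw [h3, hb' i hi]
      exact ⟨le_rfl, le_rfl⟩
  have hψS : ∀ x (hx : x ∈ gridBox a b),
      (⟨ψ x, hψmem x hx⟩ : UBall (N → ℝ)) ∈ USph (N → ℝ) ↔ x ∈ gridBoundary a b := by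
    intro x hx
    change ‖ψ x‖ = 1 ↔ _
    rw [pi_norm_eq_one_iff (mem_closedBall_zero_iff.1 (hψmem x hx))]
    constructor
    · rintro ⟨i, hi⟩
      refine ⟨hx, i, i.2, ?_⟩
      rw [hb i]
      push_cast
      refine hi.imp ?_ ?_ <;> simp only [ψ] <;> intro h <;> linarith
    · rintro ⟨-, i, hi, h⟩
      refine ⟨⟨i, hi⟩, ?_⟩
      have h2 := hb ⟨i, hi⟩
      simp only at h2
      rw [h2] at h
      push_cast at h
      refine h.imp ?_ ?_ <;> simp only [ψ] <;> intro h <;> linarith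
  have hφψ' : ∀ y : UBall (N → ℝ), ψ (φ y) = y := by
    intro y
    ext i
    have := i.2
    simp only [ψ, φ, this, dif_pos]
    ring
  have hφS : ∀ y : USph (N → ℝ), φ (y : UBall (N → ℝ)) ∈ gridBoundary a b := by
    intro y
    rw [← hψS _ (hφmem y)]
    have : (⟨ψ (φ (y : UBall (N → ℝ))), hψmem _ (hφmem y)⟩ : UBall (N → ℝ)) = y :=
      Subtype.ext (hφψ' y)
    rw [this]
    exact y.2
  obtain ⟨T₀, hT₀⟩ := hs.stationary
  let T := max T₀ 1
  have hT : 0 < T := lt_max_of_lt_right one_pos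
  have hsc : Continuous fun y : USph (N → ℝ) => s (φ (y : UBall (N → ℝ))) :=
    hs.continuousOn.comp_continuous (by fun_prop) hφS
  obtain ⟨c, k, hc, hk, hkW, hk0, hk1⟩ := exists_moore_extension f (hW.liftsRel_pi N)
    ⟨fun y => (s (φ (y : UBall (N → ℝ)))).1, continuous_fst.comp hsc⟩
    ⟨fun p => (s (φ (p.1 : UBall (N → ℝ)))).2 p.2,
      ContinuousEval.continuous_eval.comp
        ((continuous_snd.comp (hsc.comp continuous_fst)).prodMk continuous_snd)⟩
    ⟨fun y => β (φ y), by fun_prop⟩ hT (fun y => hβW _ (hφmem y))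
    (fun p => hRW _ (hφS p.1) (hs.mem _ (hφS p.1) _))
    (fun y t ht => (hT₀ _ (hφS y)).1 t ht)
    (fun y t ht => (hT₀ _ (hφS y)).2 t ((le_max_left _ _).trans ht))
  let S : UBall (N → ℝ) → Z × C(ℝ, Z') := fun y => (c y, k.curry y)
  have hS : Continuous S := by fun_prop
  have hSs : ∀ y : USph (N → ℝ), S y = s (φ (y : UBall (N → ℝ))) := fun y =>
    Prod.ext (hc y) (ContinuousMap.ext fun t => hk y t)
  let s' : (Fin n → ℝ) → Z × C(ℝ, Z') := fun x =>
    if hx : x ∈ gridBox a b then S ⟨ψ x, hψmem x hx⟩ else s x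
  have hs' : ∀ x (hx : x ∈ gridBox a b), s' x = S ⟨ψ x, hψmem x hx⟩ := fun x hx => dif_pos hx
  have hs's : Set.EqOn s' s (gridBoundary a b) := by
    intro x hx
    rw [hs' x hx.1, hSs ⟨_, (hψS x hx.1).2 hx⟩]
    exact congrArg s (hφψ x hx.1)
  refine ⟨s', ⟨?_, ⟨T + 1, fun x hx => ?_⟩, fun x hx t => ?_⟩, hs's⟩
  · rw [continuousOn_iff_continuous_domRestrict]
    have : Continuous fun x : gridBox a b => S ⟨ψ x, hψmem x x.2⟩ := by fun_prop
    exact this.congr fun x => (hs' x x.2).symm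
  · rw [hs' x hx]
    exact ⟨fun t ht => (hk0 _ t ht).trans (congrArg β (hφψ x hx)), fun t ht => hk1 _ t ht⟩
  · by_cases hx' : x ∈ gridBoundary a b
    · rw [hs's hx']
      exact hs.mem x hx' t
    · rw [hs' x hx]
      exact hWR x hx hx' (hkW _)

/-- Extension of partial lifts over a box, given suitable control over the cells. -/
theorem IsPartialLift.exists_extension {f : C(Z, Z')} {β : (Fin n → ℝ) → Z'}
    {R : (Fin n → ℝ) → Set Z'} (hβ : Continuous β)
    (hcell : ∀ a b : Fin n → ℤ, (∀ i, a i ≤ b i) → (∀ i, b i ≤ a i + 1) → ∃ W : Set Z',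
      HasCubeLifts (f.restrictPreimage W) ∧ (∀ x ∈ gridBox a b, β x ∈ W) ∧
      (∀ x ∈ gridBoundary a b, R x ⊆ W) ∧ ∀ x ∈ gridBox a b, x ∉ gridBoundary a b → W ⊆ R x)
    (a b : Fin n → ℤ) (hab : ∀ i, a i ≤ b i) (s : (Fin n → ℝ) → Z × C(ℝ, Z'))
    (hs : IsPartialLift f β R (gridBoundary a b) s) :
    ∃ s', IsPartialLift f β R (gridBox a b) s' ∧ Set.EqOn s' s (gridBoundary a b) := by
  induction hN : gridSize a b using Nat.strong_induction_on generalizing a b s with | _ N ih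
  subst hN
  by_cases hle : ∀ i, b i ≤ a i + 1
  · obtain ⟨W, hW, h1, h2, h3⟩ := hcell a b hab hle
    exact hs.exists_extension_cell hβ hab hle hW h1 h2 h3
  push Not at hle
  obtain ⟨i, hi⟩ := hle
  let a' := Function.update a i (a i + 1)
  let b' := Function.update b i (a i + 1)
  have ha'i : a' i = a i + 1 := Function.update_self ..
  have hb'i : b' i = a i + 1 := Function.update_self ..
  have ha'j : ∀ j, j ≠ i → a' j = a j := fun j hj => Function.update_of_ne hj ..
  have hb'j : ∀ j, j ≠ i → b' j = b j := fun j hj => Function.update_of_ne hj ..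
  have hiR : (a i : ℝ) + 1 < b i := by exact_mod_cast hi
  have hF : ∀ x, x ∈ gridBox a' b' ↔ x ∈ gridBox a b ∧ x i = a i + 1 := by
    intro x
    constructor
    · intro hx
      have hxi := hx i
      rw [ha'i, hb'i] at hxi
      push_cast at hxi
      refine ⟨fun j => ?_, le_antisymm hxi.2 hxi.1⟩
      by_cases hj : j = i
      · subst hj; constructor <;> linarith [hxi.1, hxi.2]
      · have := hx j
        rwa [ha'j j hj, hb'j j hj] at this
    · rintro ⟨hx, hxi⟩ j
      by_cases hj : j = i
      · subst hj; rw [ha'i, hb'i, hxi]; push_cast; simp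
      · rw [ha'j j hj, hb'j j hj]; exact hx j
  have hC₁ : ∀ x, x ∈ gridBox a b' ↔ x ∈ gridBox a b ∧ x i ≤ a i + 1 := by
    intro x
    constructor
    · intro hx
      have hxi := hx i
      rw [hb'i] at hxi
      push_cast at hxi
      refine ⟨fun j => ?_, hxi.2⟩
      by_cases hj : j = i
      · subst hj; constructor <;> linarith [hxi.1, hxi.2]
      · have := hx j
        rwa [hb'j j hj] at this
    · rintro ⟨hx, hxi⟩ j
      by_cases hj : j = i
      · subst hj; rw [hb'i]; push_cast; exact ⟨(hx j).1, hxi⟩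
      · rw [hb'j j hj]; exact hx j
  have hC₂ : ∀ x, x ∈ gridBox a' b ↔ x ∈ gridBox a b ∧ a i + 1 ≤ x i := by
    intro x
    constructor
    · intro hx
      have hxi := hx i
      rw [ha'i] at hxi
      push_cast at hxi
      refine ⟨fun j => ?_, hxi.1⟩
      by_cases hj : j = i
      · subst hj; constructor <;> linarith [hxi.1, hxi.2]
      · have := hx j
        rwa [ha'j j hj] at this
    · rintro ⟨hx, hxi⟩ j
      by_cases hj : j = i
      · subst hj; rw [ha'i]; push_cast; exact ⟨hxi, (hx j).2⟩
      · rw [ha'j j hj]; exact hx j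
  have hbF : gridBoundary a' b' = gridBoundary a b ∩ gridBox a' b' := by
    ext x
    constructor
    · rintro ⟨hx, j, hj, hxj⟩
      have hji : j ≠ i := by rintro rfl; rw [ha'i, hb'i] at hj; exact lt_irrefl _ hj
      rw [ha'j j hji, hb'j j hji] at hj hxj
      exact ⟨⟨((hF x).1 hx).1, j, hj, hxj⟩, hx⟩
    · rintro ⟨⟨-, j, hj, hxj⟩, hx⟩
      have hji : j ≠ i := by
        rintro rfl
        rw [((hF x).1 hx).2] at hxj
        rcases hxj with h | h <;> linarith
      exact ⟨hx, j, by rwa [ha'j j hji, hb'j j hji], by rwa [ha'j j hji, hb'j j hji]⟩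
  have hbC₁ : gridBoundary a b' = (gridBoundary a b ∪ gridBox a' b') ∩ gridBox a b' := by
    ext x
    constructor
    · rintro ⟨hx, j, hj, hxj⟩
      refine ⟨?_, hx⟩
      by_cases hji : j = i
      · subst hji
        rcases hxj with h | h
        · exact .inl ⟨((hC₁ x).1 hx).1, j, by omega, .inl h⟩
        · refine .inr ((hF x).2 ⟨((hC₁ x).1 hx).1, ?_⟩)
          rw [h, hb'i]; push_cast; rfl
      · rw [hb'j j hji] at hj hxj
        exact .inl ⟨((hC₁ x).1 hx).1, j, hj, hxj⟩
    · rintro ⟨⟨-, j, hj, hxj⟩ | hxF, hx⟩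
      · refine ⟨hx, j, ?_⟩
        by_cases hji : j = i
        · subst hji
          rcases hxj with h | h
          · exact ⟨by omega, .inl h⟩
          · have := ((hC₁ x).1 hx).2
            linarith
        · rw [hb'j j hji]; exact ⟨hj, hxj⟩
      · refine ⟨hx, i, by omega, .inr ?_⟩
        rw [((hF x).1 hxF).2, hb'i]; push_cast; rfl
  have hbC₂ : gridBoundary a' b = (gridBoundary a b ∪ gridBox a' b') ∩ gridBox a' b := by
    ext x
    constructor
    · rintro ⟨hx, j, hj, hxj⟩
      refine ⟨?_, hx⟩
      by_cases hji : j = i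
      · subst hji
        rcases hxj with h | h
        · refine .inr ((hF x).2 ⟨((hC₂ x).1 hx).1, ?_⟩)
          rw [h, ha'i]; push_cast; rfl
        · exact .inl ⟨((hC₂ x).1 hx).1, j, by omega, .inr h⟩
      · rw [ha'j j hji] at hj hxj
        exact .inl ⟨((hC₂ x).1 hx).1, j, hj, hxj⟩
    · rintro ⟨⟨-, j, hj, hxj⟩ | hxF, hx⟩
      · refine ⟨hx, j, ?_⟩
        by_cases hji : j = i
        · subst hji
          rcases hxj with h | h
          · have := ((hC₂ x).1 hx).2
            linarith
          · exact ⟨by omega, .inr h⟩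
        · rw [ha'j j hji]; exact ⟨hj, hxj⟩
      · refine ⟨hx, i, by omega, .inl ?_⟩
        rw [((hF x).1 hxF).2, ha'i]; push_cast; rfl
  obtain ⟨s₁, hs₁, hs₁s⟩ := ih _ (gridSize_lt (fun j => by
      by_cases hj : j = i
      · subst hj; omega
      · rw [ha'j j hj, hb'j j hj]) i (by omega)) a' b' (fun j => by
      by_cases hj : j = i
      · subst hj; omega
      · rw [ha'j j hj, hb'j j hj]; exact hab j) s
    (hs.mono (hbF ▸ Set.inter_subset_left)) rfl
  obtain ⟨s₂, hs₂, hs₂s, -⟩ := hs.exists_union hs₁ (isClosed_gridBoundary a b)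
    (isClosed_gridBox a' b') (fun x hx => (hs₁s (hbF ▸ hx)).symm)
  obtain ⟨s₃, hs₃, hs₃s⟩ := ih _ (gridSize_lt (fun j => by
      by_cases hj : j = i
      · subst hj; omega
      · rw [hb'j j hj]) i (by omega)) a b' (fun j => by
      by_cases hj : j = i
      · subst hj; omega
      · rw [hb'j j hj]; exact hab j) s₂
    (hs₂.mono (hbC₁ ▸ Set.inter_subset_left)) rfl
  obtain ⟨s₄, hs₄, hs₄s⟩ := ih _ (gridSize_lt (fun j => by
      by_cases hj : j = i
      · subst hj; omega
      · rw [ha'j j hj]) i (by omega)) a' b (fun j => by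
      by_cases hj : j = i
      · subst hj; omega
      · rw [ha'j j hj]; exact hab j) s₂
    (hs₂.mono (hbC₂ ▸ Set.inter_subset_left)) rfl
  obtain ⟨s₅, hs₅, h₅₁, h₅₂⟩ := hs₃.exists_union hs₄ (isClosed_gridBox a b')
    (isClosed_gridBox a' b) (by
      rintro x ⟨h1, h2⟩
      have hxF : x ∈ gridBox a' b' := (hF x).2 ⟨((hC₁ x).1 h1).1,
        le_antisymm ((hC₁ x).1 h1).2 ((hC₂ x).1 h2).2⟩
      rw [hs₃s (hbC₁ ▸ ⟨.inr hxF, h1⟩), hs₄s (hbC₂ ▸ ⟨.inr hxF, h2⟩)])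
  refine ⟨s₅, hs₅.mono fun x hx => ?_, fun x hx => ?_⟩
  · rcases le_total (x i) (a i + 1) with h | h
    · exact .inl ((hC₁ x).2 ⟨hx, h⟩)
    · exact .inr ((hC₂ x).2 ⟨hx, h⟩)
  · rcases le_total (x i) (a i + 1) with h | h
    · have h1 := (hC₁ x).2 ⟨hx.1, h⟩
      rw [h₅₁ h1, hs₃s (hbC₁ ▸ ⟨.inl hx, h1⟩), hs₂s hx]
    · have h1 := (hC₂ x).2 ⟨hx.1, h⟩
      rw [h₅₂ h1, hs₄s (hbC₂ ▸ ⟨.inl hx, h1⟩), hs₂s hx]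

end Grid

section LocalToGlobal

variable {Z Z' : Type*} [TopologicalSpace Z] [TopologicalSpace Z']

theorem gridBox_subset_of_mem_interior {n : ℕ} {a b d : Fin n → ℤ} (hab : ∀ i, a i ≤ b i)
    (hab' : ∀ i, b i ≤ a i + 1) {x : Fin n → ℝ} (hx : x ∈ gridBox a b)
    (hx' : x ∉ gridBoundary a b) (hd : x ∈ gridBox d (fun i => d i + 1)) :
    gridBox a b ⊆ gridBox d (fun i => d i + 1) := by
  have key : ∀ i, d i ≤ a i ∧ b i ≤ d i + 1 := by
    intro i
    have h1 := hx i
    have h2 := hd i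
    rcases (hab i).lt_or_eq with hlt | heq
    · have h3 : x i ≠ a i := fun h => hx' ⟨hx, i, hlt, .inl h⟩
      have h4 : x i ≠ b i := fun h => hx' ⟨hx, i, hlt, .inr h⟩
      have h5 : (d i : ℝ) < b i := lt_of_le_of_lt h2.1 (lt_of_le_of_ne h1.2 h4)
      have h6 : (a i : ℝ) < (d i + 1 : ℤ) := lt_of_lt_of_le (lt_of_le_of_ne h1.1 h3.symm) h2.2
      have h7 : d i < b i := by exact_mod_cast h5
      have h8 : a i < d i + 1 := by exact_mod_cast h6
      have := hab' i
      omega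
    · rw [← heq] at h1 ⊢
      have h3 : x i = a i := le_antisymm h1.2 h1.1
      rw [h3] at h2
      exact ⟨by exact_mod_cast h2.1, by exact_mod_cast h2.2⟩
  intro y hy i
  have h1 := hy i
  have h2 : (d i : ℝ) ≤ a i := by exact_mod_cast (key i).1
  have h3 : (b i : ℝ) ≤ (d i + 1 : ℤ) := by exact_mod_cast (key i).2
  exact ⟨h2.trans h1.1, h1.2.trans h3⟩

/-- A box all of whose grid cubes are small with respect to an open cover by two sets over which
relative lifting problems are solvable. -/
theorem exists_cell_control {n : ℕ} {f : C(Z, Z')} {U V : Set Z'} (β : (Fin n → ℝ) → Z')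
    (hU : HasCubeLifts (f.restrictPreimage U)) (hV : HasCubeLifts (f.restrictPreimage V))
    (hUV : HasCubeLifts (f.restrictPreimage (U ∩ V)))
    (hβ : ∀ d : Fin n → ℤ, (∀ x ∈ gridBox d (fun i => d i + 1), β x ∈ U) ∨
      ∀ x ∈ gridBox d (fun i => d i + 1), β x ∈ V) :
    ∃ R : (Fin n → ℝ) → Set Z', (∀ x, β x ∈ R x) ∧
      ∀ a b : Fin n → ℤ, (∀ i, a i ≤ b i) → (∀ i, b i ≤ a i + 1) → ∃ W : Set Z',
        HasCubeLifts (f.restrictPreimage W) ∧ (∀ x ∈ gridBox a b, β x ∈ W) ∧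
        (∀ x ∈ gridBoundary a b, R x ⊆ W) ∧
        ∀ x ∈ gridBox a b, x ∉ gridBoundary a b → W ⊆ R x := by
  let D : Set Z' → Set (Fin n → ℝ) := fun O =>
    {x | ∃ d : Fin n → ℤ, x ∈ gridBox d (fun i => d i + 1) ∧
      ∀ y ∈ gridBox d (fun i => d i + 1), β y ∈ O}
  have hD : ∀ O, ∀ x ∈ D O, β x ∈ O := fun O x ⟨d, hx, h⟩ => h x hx
  have hD' : ∀ O (a b : Fin n → ℤ), (∀ i, a i ≤ b i) → (∀ i, b i ≤ a i + 1) →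
      ∀ x ∈ gridBox a b, x ∉ gridBoundary a b → x ∈ D O → gridBox a b ⊆ D O := by
    rintro O a b hab hab' x hx hx' ⟨d, hd, h⟩ y hy
    exact ⟨d, gridBox_subset_of_mem_interior hab hab' hx hx' hd hy, h⟩
  refine ⟨fun x => {z | (x ∈ D U → z ∈ U) ∧ (x ∈ D V → z ∈ V)}, fun x => ⟨hD U x, hD V x⟩,
    fun a b hab hab' => ?_⟩
  refine ⟨{z | (gridBox a b ⊆ D U → z ∈ U) ∧ (gridBox a b ⊆ D V → z ∈ V)}, ?_,
    fun x hx => ⟨fun h => hD U x (h hx), fun h => hD V x (h hx)⟩,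
    fun x hx z hz => ⟨fun h => hz.1 (h hx.1), fun h => hz.2 (h hx.1)⟩,
    fun x hx hx' z hz => ⟨fun h => hz.1 (hD' U a b hab hab' x hx hx' h),
      fun h => hz.2 (hD' V a b hab hab' x hx hx' h)⟩⟩
  have hsub : gridBox a b ⊆ gridBox a (fun i => a i + 1) := fun x hx i =>
    ⟨(hx i).1, (hx i).2.trans (by exact_mod_cast hab' i)⟩
  have hor : gridBox a b ⊆ D U ∨ gridBox a b ⊆ D V :=
    (hβ a).imp (fun h x hx => ⟨a, hsub hx, h⟩) (fun h x hx => ⟨a, hsub hx, h⟩)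
  have hset : ∀ O : Set Z', HasCubeLifts (f.restrictPreimage O) →
      (∀ z, ((gridBox a b ⊆ D U → z ∈ U) ∧ (gridBox a b ⊆ D V → z ∈ V)) ↔ z ∈ O) →
      HasCubeLifts (f.restrictPreimage
        {z | (gridBox a b ⊆ D U → z ∈ U) ∧ (gridBox a b ⊆ D V → z ∈ V)}) := by
    intro O hO h
    obtain rfl : {z | (gridBox a b ⊆ D U → z ∈ U) ∧ (gridBox a b ⊆ D V → z ∈ V)} = O := Set.ext h
    exact hO
  by_cases h1 : gridBox a b ⊆ D U <;> by_cases h2 : gridBox a b ⊆ D V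
  · exact hset _ hUV fun z => by simp [h1, h2]
  · exact hset _ hU fun z => by simp [h1, h2]
  · exact hset _ hV fun z => by simp [h1, h2]
  · exact (hor.elim h1 h2).elim

/-- The relative lifting property for cubes is local on the target for covers by two open sets. -/
theorem hasCubeLifts_of_open_cover {f : C(Z, Z')} {U V : Set Z'} (hUo : IsOpen U) (hVo : IsOpen V)
    (hcov : U ∪ V = Set.univ) (hU : HasCubeLifts (f.restrictPreimage U))
    (hV : HasCubeLifts (f.restrictPreimage V))
    (hUV : HasCubeLifts (f.restrictPreimage (U ∩ V))) : HasCubeLifts f := by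
  classical
  intro n α β hαβ
  have hne : Nonempty Z := by
    have hW : ∀ (W : Set Z'), HasCubeLifts (f.restrictPreimage W) → ∀ z ∈ W, Nonempty Z := by
      intro W hW z hz
      have hbd : ∀ x : Fin 0 → I, x ∉ Cube.boundary (Fin 0) := fun x => by simp [Cube.boundary]
      obtain ⟨γ, -⟩ := hW.liftsRel_cube 0
        ⟨fun x => (hbd x x.2).elim, continuous_iff_continuousAt.2 fun x => (hbd x x.2).elim⟩
        (.const _ ⟨z, hz⟩) (fun x => (hbd x x.2).elim)
      exact ⟨γ 0⟩
    have : β 0 ∈ U ∪ V := hcov ▸ Set.mem_univ _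
    exact this.elim (hW U hU _) (hW V hV _)
  obtain ⟨δ, hδ, hLeb⟩ := lebesgue_number_lemma_of_metric
    (s := (Set.univ : Set (UBall (Fin n → ℝ))))
    (c := fun j : Bool => β ⁻¹' (cond j U V)) isCompact_univ
    (by rintro (_ | _) <;> [exact hVo.preimage β.continuous; exact hUo.preimage β.continuous])
    (fun x _ => by
      have : β x ∈ U ∪ V := hcov ▸ Set.mem_univ _
      rw [Set.mem_iUnion]
      exact this.elim (fun h => ⟨true, h⟩) (fun h => ⟨false, h⟩))
  obtain ⟨M, hM⟩ := exists_nat_gt (2 / δ)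
  have hM0 : (0 : ℝ) < M := (div_pos two_pos hδ).trans hM
  have hMδ : 2 / (M : ℝ) < δ := by
    rw [div_lt_iff₀ hδ] at hM
    rw [div_lt_iff₀ hM0]; linarith
  have hclamp : ∀ r : ℝ, |(Set.projIcc (-1 : ℝ) 1 (by norm_num) r : ℝ)| ≤ 1 := fun r =>
    abs_le.2 (Set.projIcc (-1 : ℝ) 1 (by norm_num) r).2
  let k : (Fin n → ℝ) → UBall (Fin n → ℝ) := fun x =>
    ⟨fun i => Set.projIcc (-1 : ℝ) 1 (by norm_num) (2 * x i / M - 1), by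
      rw [mem_closedBall_zero_iff, pi_norm_le_iff_of_nonneg zero_le_one]
      exact fun i => hclamp _⟩
  have hk : Continuous k := Continuous.subtype_mk (continuous_pi fun i =>
    continuous_subtype_val.comp (continuous_projIcc.comp (by fun_prop))) _
  have hkdist : ∀ (d : Fin n → ℤ), ∀ x ∈ gridBox d (fun i => d i + 1),
      k x ∈ Metric.ball (k fun i => d i) δ := by
    intro d x hx
    rw [Metric.mem_ball]
    refine lt_of_le_of_lt ((dist_pi_le_iff (by positivity)).2 fun i => ?_) hMδ
    refine (Set.abs_projIcc_sub_projIcc (by norm_num)).trans ?_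
    have h1 := hx i
    push_cast at h1
    have h2 : 2 * x i / M - 1 - (2 * (d i : ℝ) / M - 1) = 2 / M * (x i - d i) := by ring
    rw [h2, abs_mul, abs_of_pos (div_pos two_pos hM0)]
    refine mul_le_of_le_one_right (by positivity) (abs_le.2 ⟨?_, ?_⟩) <;> linarith [h1.1, h1.2]
  let β' : (Fin n → ℝ) → Z' := fun x => β (k x)
  obtain ⟨R, hR, hcell⟩ := exists_cell_control (f := f) β' hU hV hUV (fun d => by
    obtain ⟨j, hj⟩ := hLeb (k fun i => d i) (Set.mem_univ _)
    cases j
    · exact .inr fun x hx => hj (hkdist d x hx)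
    · exact .inl fun x hx => hj (hkdist d x hx))
  let a : Fin n → ℤ := fun _ => 0
  let b : Fin n → ℤ := fun _ => M
  let j : UBall (Fin n → ℝ) → Fin n → ℝ := fun y i => ((y : Fin n → ℝ) i + 1) * M / 2
  have hj : Continuous j := continuous_pi fun i =>
    ((((continuous_apply i).comp continuous_subtype_val).add continuous_const).mul
      continuous_const).div_const 2
  have hy : ∀ (y : UBall (Fin n → ℝ)) i, -1 ≤ (y : Fin n → ℝ) i ∧ (y : Fin n → ℝ) i ≤ 1 :=
    fun y i => abs_le.1 ((pi_norm_le_iff_of_nonneg zero_le_one).1 y.norm_le_one i)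
  have hkj : ∀ y, k (j y) = y := by
    intro y
    apply Subtype.ext
    ext i
    have h1 : 2 * j y i / M - 1 = (y : Fin n → ℝ) i := by
      simp only [j]; field_simp; ring
    simp only [k, h1]
    rw [Set.projIcc_of_mem _ (hy y i)]
  have hjbox : ∀ y, j y ∈ gridBox a b := by
    intro y i
    have := hy y i
    simp only [a, b, j]
    push_cast
    constructor
    · have : 0 ≤ ((y : Fin n → ℝ) i + 1) * M := mul_nonneg (by linarith) hM0.le
      linarith
    · have : ((y : Fin n → ℝ) i + 1) * M ≤ 2 * M :=
        mul_le_mul_of_nonneg_right (by linarith) hM0.le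
      linarith
  have hab : ∀ i, a i < b i := fun i => by simpa [a, b] using hM0
  have hkS : ∀ x ∈ gridBoundary a b, k x ∈ USph (Fin n → ℝ) := by
    rintro x ⟨-, i, -, hi⟩
    refine (pi_norm_eq_one_iff (k x).norm_le_one).2 ⟨i, hi.imp (fun h => ?_) (fun h => ?_)⟩
    · simp only [k, h, a]
      rw [Set.projIcc_of_le_left _ (by simp)]
    · simp only [k, h, b]
      rw [Set.projIcc_of_right_le]
      push_cast
      rw [mul_div_assoc, div_self hM0.ne']
      norm_num
  have hjS : ∀ y : USph (Fin n → ℝ), j y ∈ gridBoundary a b := by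
    intro y
    obtain ⟨i, hi⟩ := (pi_norm_eq_one_iff y.1.norm_le_one).1 y.2
    refine ⟨hjbox y, i, hab i, hi.imp (fun h => ?_) (fun h => ?_)⟩
    · simp [j, h, a]
    · simp only [j, h, b]
      push_cast
      ring
  let s : (Fin n → ℝ) → Z × C(ℝ, Z') := fun x =>
    (if hx : k x ∈ USph (Fin n → ℝ) then α ⟨k x, hx⟩ else Classical.arbitrary Z,
      ContinuousMap.const ℝ (β' x))
  have hs1 : ∀ x (hx : k x ∈ USph (Fin n → ℝ)), s x = (α ⟨k x, hx⟩, ContinuousMap.const ℝ (β' x)) :=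
    fun x hx => Prod.ext (dif_pos hx) rfl
  have hs : IsPartialLift f β' R (gridBoundary a b) s := by
    refine ⟨?_, ⟨0, fun x hx => ⟨fun t _ => rfl, fun t _ => ?_⟩⟩, fun x _ t => hR x⟩
    · rw [continuousOn_iff_continuous_domRestrict]
      have h1 : Continuous fun x : gridBoundary a b =>
          (α ⟨k x, hkS x x.2⟩, ContinuousMap.const ℝ (β' x)) := by
        refine (α.continuous.comp (by fun_prop)).prodMk ?_
        exact ContinuousMap.continuous_const'.comp
          (β.continuous.comp (hk.comp continuous_subtype_val))
      exact h1.congr fun x => (hs1 x (hkS x x.2)).symm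
    · rw [hs1 x (hkS x hx)]
      exact (hαβ ⟨k x, hkS x hx⟩).symm
  obtain ⟨s', hs', hss'⟩ := hs.exists_extension (by fun_prop) hcell a b (fun i => (hab i).le)
  obtain ⟨T₀, hT₀⟩ := hs'.stationary
  let T := max T₀ 0
  have hs'c : Continuous fun y : UBall (Fin n → ℝ) => s' (j y) :=
    hs'.continuousOn.comp_continuous hj hjbox
  have hs'S : ∀ y : USph (Fin n → ℝ), s' (j y) = (α y, ContinuousMap.const ℝ (β y)) := by
    intro y
    have h1 : k (j y) ∈ USph (Fin n → ℝ) := by rw [hkj]; exact y.2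
    rw [hss' (hjS y), hs1 _ h1]
    have h2 : (⟨k (j y), h1⟩ : USph (Fin n → ℝ)) = y := Subtype.ext (hkj y)
    simp only [β', hkj]
  refine ⟨⟨fun y => (s' (j y)).1, continuous_fst.comp hs'c⟩, fun y => ?_, homotopicRel_iff.2
    ⟨⟨fun p => (s' (j p.2)).2 ((1 - (p.1 : ℝ)) * T), ContinuousEval.continuous_eval.comp
      ((continuous_snd.comp (hs'c.comp continuous_snd)).prodMk (by fun_prop))⟩,
      fun y => ?_, fun y => ?_, fun t y hy => ?_⟩⟩
  · exact congrArg Prod.fst (hs'S y)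
  · simp only [ContinuousMap.coe_mk, Set.Icc.coe_zero, sub_zero, one_mul]
    exact (hT₀ _ (hjbox y)).2 _ (le_max_left _ _)
  · simp only [ContinuousMap.coe_mk, Set.Icc.coe_one, sub_self, zero_mul]
    rw [(hT₀ _ (hjbox y)).1 0 le_rfl]
    exact congrArg β (hkj y)
  · simp only [ContinuousMap.coe_mk, ContinuousMap.comp_apply]
    rw [hs'S ⟨y, hy⟩]
    exact (hαβ ⟨y, hy⟩).symm

end LocalToGlobal

section Descent

variable {S Q R A B : Type*} [TopologicalSpace S] [TopologicalSpace Q] [TopologicalSpace R]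
  [TopologicalSpace A] [TopologicalSpace B]

/-- A map on the preimage of an open set descends along a quotient map if it respects a
relation generating the kernel. -/
theorem exists_desc_of_isQuotientMap {π : S → Q} (hπ : IsQuotientMap π) {r : S → S → Prop}
    (hr : ∀ a b, r a b → π a = π b) (hker : ∀ a b, π a = π b → Relation.EqvGen r a b)
    {W : Set Q} (hW : IsOpen W) (g : C(π ⁻¹' W, R))
    (hg : ∀ a b, r a b → ∀ (ha : π a ∈ W) (hb : π b ∈ W), g ⟨a, ha⟩ = g ⟨b, hb⟩) :
    ∃ d : C(W, R), ∀ s (hs : π s ∈ W), d ⟨π s, hs⟩ = g ⟨s, hs⟩ := by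
  have key : ∀ a b, Relation.EqvGen r a b → π a = π b ∧
      ∀ (ha : π a ∈ W) (hb : π b ∈ W), g ⟨a, ha⟩ = g ⟨b, hb⟩ := by
    intro a b h
    induction h with
    | rel a b h => exact ⟨hr a b h, hg a b h⟩
    | refl a => exact ⟨rfl, fun _ _ => rfl⟩
    | symm a b _ ih => exact ⟨ih.1.symm, fun ha hb => (ih.2 hb ha).symm⟩
    | trans a b c _ _ ih ih' =>
      refine ⟨ih.1.trans ih'.1, fun ha hc => ?_⟩
      have hb : π b ∈ W := ih.1 ▸ ha
      exact (ih.2 ha hb).trans (ih'.2 hb hc)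
  have hq := hπ.restrictPreimage_isOpen hW
  let π' : C(π ⁻¹' W, W) := ⟨W.restrictPreimage π, hq.continuous⟩
  have hq' : IsQuotientMap π' := hq
  have hf : Function.FactorsThrough g π' := by
    intro a b hab
    exact (key a b (hker a b (congrArg Subtype.val hab))).2 a.2 b.2
  exact ⟨hq'.lift g hf, fun s hs => congrFun (congrArg DFunLike.coe (hq'.lift_comp g hf)) ⟨s, hs⟩⟩

theorem exists_sum_desc (W : Set (A ⊕ B)) (hW : IsOpen W) (f : C(Sum.inl ⁻¹' W, R))
    (g : C(Sum.inr ⁻¹' W, R)) :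
    ∃ h : C(W, R), (∀ a ha, h ⟨Sum.inl a, ha⟩ = f ⟨a, ha⟩) ∧
      ∀ b hb, h ⟨Sum.inr b, hb⟩ = g ⟨b, hb⟩ := by
  let h : W → R := fun s => match s with
    | ⟨Sum.inl a, ha⟩ => f ⟨a, ha⟩
    | ⟨Sum.inr b, hb⟩ => g ⟨b, hb⟩
  refine ⟨⟨h, ?_⟩, fun _ _ => rfl, fun _ _ => rfl⟩
  rw [continuous_def]
  intro O hO
  rw [hW.isOpenEmbedding_subtypeVal.isOpen_iff_image_isOpen, isOpen_sum_iff]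
  have ho₁ : IsOpen (Sum.inl ⁻¹' W : Set A) := hW.preimage continuous_inl
  have ho₂ : IsOpen (Sum.inr ⁻¹' W : Set B) := hW.preimage continuous_inr
  constructor
  · convert ho₁.isOpenEmbedding_subtypeVal.isOpenMap _ (hO.preimage f.continuous) using 1
    ext a
    simp [h]
  · convert ho₂.isOpenEmbedding_subtypeVal.isOpenMap _ (hO.preimage g.continuous) using 1
    ext a
    simp [h]

end Descent

section DoubleCylinder

/-- The relation defining the double mapping cylinder of `Z ← L → C`. -/
inductive CylRel {L Z C : Type*} [TopologicalSpace L] [TopologicalSpace Z] [TopologicalSpace C]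
    (j : C(L, Z)) (q : C(L, C)) : Z ⊕ (L × I) ⊕ C → Z ⊕ (L × I) ⊕ C → Prop
  | left (l : L) : CylRel j q (Sum.inr (Sum.inl (l, 0))) (Sum.inl (j l))
  | right (l : L) : CylRel j q (Sum.inr (Sum.inl (l, 1))) (Sum.inr (Sum.inr (q l)))

/-- The double mapping cylinder of `Z ← L → C`. -/
abbrev DoubleCyl {L Z C : Type*} [TopologicalSpace L] [TopologicalSpace Z] [TopologicalSpace C]
    (j : C(L, Z)) (q : C(L, C)) : Type _ := Quot (CylRel j q)

namespace DoubleCyl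

variable {L Z C R : Type*} [TopologicalSpace L] [TopologicalSpace Z] [TopologicalSpace C]
  [TopologicalSpace R] (j : C(L, Z)) (q : C(L, C))

/-- The inclusion of the left end. -/
def inl : C(Z, DoubleCyl j q) := ⟨fun z => Quot.mk _ (Sum.inl z), by fun_prop⟩

/-- The map from the cylinder on `L`. -/
def mid : C(L × I, DoubleCyl j q) := ⟨fun p => Quot.mk _ (Sum.inr (Sum.inl p)), by fun_prop⟩

/-- The inclusion of the right end. -/
def inr : C(C, DoubleCyl j q) := ⟨fun c => Quot.mk _ (Sum.inr (Sum.inr c)), by fun_prop⟩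

variable {j q}

theorem mid_zero (l : L) : mid j q (l, 0) = inl j q (j l) := Quot.sound (CylRel.left l)

theorem mid_one (l : L) : mid j q (l, 1) = inr j q (q l) := Quot.sound (CylRel.right l)

theorem induction {p : DoubleCyl j q → Prop} (h₁ : ∀ z, p (inl j q z)) (h₂ : ∀ x, p (mid j q x))
    (h₃ : ∀ c, p (inr j q c)) (m : DoubleCyl j q) : p m := by
  induction m using Quot.ind with
  | mk s =>
    rcases s with z | x | c
    exacts [h₁ z, h₂ x, h₃ c]

theorem exists_desc_open {W : Set (DoubleCyl j q)} (hW : IsOpen W) (f : C(inl j q ⁻¹' W, R))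
    (g : C(mid j q ⁻¹' W, R)) (k : C(inr j q ⁻¹' W, R))
    (h₀ : ∀ l hl hl', g ⟨(l, 0), hl⟩ = f ⟨j l, hl'⟩)
    (h₁ : ∀ l hl hl', g ⟨(l, 1), hl⟩ = k ⟨q l, hl'⟩) :
    ∃ d : C(W, R), (∀ z hz, d ⟨inl j q z, hz⟩ = f ⟨z, hz⟩) ∧
      (∀ x hx, d ⟨mid j q x, hx⟩ = g ⟨x, hx⟩) ∧ ∀ c hc, d ⟨inr j q c, hc⟩ = k ⟨c, hc⟩ := by
  have hW' : IsOpen (Quot.mk (CylRel j q) ⁻¹' W) := hW.preimage continuous_quot_mk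
  obtain ⟨u, hu₁, hu₂⟩ := exists_sum_desc (Sum.inr ⁻¹' (Quot.mk (CylRel j q) ⁻¹' W))
    (hW'.preimage continuous_inr) g k
  obtain ⟨v, hv₁, hv₂⟩ := exists_sum_desc _ hW' f u
  obtain ⟨d, hd⟩ := exists_desc_of_isQuotientMap (isQuotientMap_quot_mk)
    (fun _ _ h => Quot.sound h) (fun _ _ h => Quot.eqvGen_exact h) hW v (by
      rintro _ _ (l | l) ha hb
      · exact (hv₂ _ ha).trans ((hu₁ _ ha).trans ((h₀ l ha hb).trans (hv₁ _ hb).symm))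
      · exact (hv₂ _ ha).trans ((hu₁ _ ha).trans ((h₁ l ha hb).trans
          ((hu₂ _ hb).symm.trans (hv₂ _ hb).symm))))
  exact ⟨d, fun z hz => (hd _ hz).trans (hv₁ _ hz),
    fun z hz => (hd _ hz).trans ((hv₂ _ hz).trans (hu₁ _ hz)),
    fun z hz => (hd _ hz).trans ((hv₂ _ hz).trans (hu₂ _ hz))⟩

theorem exists_homotopy_desc_open {W : Set (DoubleCyl j q)} (hW : IsOpen W)
    (f : C((inl j q ⁻¹' W) × I, R)) (g : C((mid j q ⁻¹' W) × I, R))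
    (k : C((inr j q ⁻¹' W) × I, R))
    (h₀ : ∀ l hl hl' t, g (⟨(l, 0), hl⟩, t) = f (⟨j l, hl'⟩, t))
    (h₁ : ∀ l hl hl' t, g (⟨(l, 1), hl⟩, t) = k (⟨q l, hl'⟩, t)) :
    ∃ d : C(W × I, R), (∀ z hz t, d (⟨inl j q z, hz⟩, t) = f (⟨z, hz⟩, t)) ∧
      (∀ x hx t, d (⟨mid j q x, hx⟩, t) = g (⟨x, hx⟩, t)) ∧
      ∀ c hc t, d (⟨inr j q c, hc⟩, t) = k (⟨c, hc⟩, t) := by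
  obtain ⟨d, hd₁, hd₂, hd₃⟩ := exists_desc_open hW f.curry g.curry k.curry
    (fun l hl hl' => ContinuousMap.ext (h₀ l hl hl'))
    (fun l hl hl' => ContinuousMap.ext (h₁ l hl hl'))
  exact ⟨d.uncurry, fun z hz t => DFunLike.congr_fun (hd₁ z hz) t,
    fun z hz t => DFunLike.congr_fun (hd₂ z hz) t, fun z hz t => DFunLike.congr_fun (hd₃ z hz) t⟩

theorem exists_homotopy_desc (f : C(Z × I, R)) (g : C((L × I) × I, R)) (k : C(C × I, R))
    (h₀ : ∀ l t, g ((l, 0), t) = f (j l, t)) (h₁ : ∀ l t, g ((l, 1), t) = k (q l, t)) :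
    ∃ d : C(DoubleCyl j q × I, R), (∀ z t, d (inl j q z, t) = f (z, t)) ∧
      (∀ x t, d (mid j q x, t) = g (x, t)) ∧ ∀ c t, d (inr j q c, t) = k (c, t) := by
  obtain ⟨d, hd₁, hd₂, hd₃⟩ := exists_homotopy_desc_open (j := j) (q := q) isOpen_univ
    (f.comp ⟨fun p => (p.1.1, p.2), by fun_prop⟩) (g.comp ⟨fun p => (p.1.1, p.2), by fun_prop⟩)
    (k.comp ⟨fun p => (p.1.1, p.2), by fun_prop⟩) (fun l _ _ => h₀ l) (fun l _ _ => h₁ l)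
  exact ⟨d.comp ⟨fun p => (⟨p.1, trivial⟩, p.2), by fun_prop⟩, fun z => hd₁ z trivial,
    fun z => hd₂ z trivial, fun z => hd₃ z trivial⟩

theorem exists_desc (f : C(Z, R)) (g : C(L × I, R)) (k : C(C, R))
    (h₀ : ∀ l, g (l, 0) = f (j l)) (h₁ : ∀ l, g (l, 1) = k (q l)) :
    ∃ d : C(DoubleCyl j q, R), (∀ z, d (inl j q z) = f z) ∧
      (∀ x, d (mid j q x) = g x) ∧ ∀ c, d (inr j q c) = k c := by
  obtain ⟨d, hd₁, hd₂, hd₃⟩ := exists_homotopy_desc (j := j) (q := q) (f.comp .fst)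
    (g.comp .fst) (k.comp .fst) (fun l _ => h₀ l) (fun l _ => h₁ l)
  exact ⟨d.comp ⟨fun p => (p, 0), by fun_prop⟩, fun z => hd₁ z 0,
    fun z => hd₂ z 0, fun z => hd₃ z 0⟩

variable (j q) in
/-- The height function, `0` on the left end and `1` on the right end. -/
theorem exists_height : ∃ τ : C(DoubleCyl j q, I), (∀ z, τ (inl j q z) = 0) ∧
    (∀ x, τ (mid j q x) = x.2) ∧ ∀ c, τ (inr j q c) = 1 :=
  exists_desc (ContinuousMap.const _ 0) .snd (ContinuousMap.const _ 1) (fun _ => rfl)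
    (fun _ => rfl)

end DoubleCyl

end DoubleCylinder

theorem restrictPreimage_mk {S T : Type*} [TopologicalSpace S] [TopologicalSpace T] {F : C(S, T)}
    {W : Set T} {m : S} {m' : T} (hm : F m = m') (h : m ∈ F ⁻¹' W) :
    F.restrictPreimage W ⟨m, h⟩ = ⟨m', hm ▸ h⟩ := Subtype.ext hm

namespace DoubleCyl

section Retracts

variable {L Z C : Type*} [TopologicalSpace L] [TopologicalSpace Z] [TopologicalSpace C]
  {j : C(L, Z)} {q : C(L, C)} {W : Set (DoubleCyl j q)}

/-- The unique map out of a space known to be empty. -/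
def elimEmpty {T R : Type*} [TopologicalSpace T] [TopologicalSpace R] (h : T → False) : C(T, R) :=
  haveI : IsEmpty T := ⟨h⟩
  ⟨isEmptyElim, continuous_of_const fun x => isEmptyElim x⟩

theorem exists_left_retraction (hWo : IsOpen W) (hl : ∀ z, inl j q z ∈ W)
    (hm : ∀ x, mid j q x ∈ W ↔ x.2 < 1) (hr : ∀ c, inr j q c ∉ W) :
    ∃ (d : C(W, Z)) (Φ : C(W × I, W)), (∀ z hz, d ⟨inl j q z, hz⟩ = z) ∧
      (∀ x hx, d ⟨mid j q x, hx⟩ = j x.1) ∧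
      (∀ z hz t, (Φ (⟨inl j q z, hz⟩, t) : DoubleCyl j q) = inl j q z) ∧
      (∀ x hx t, (Φ (⟨mid j q x, hx⟩, t) : DoubleCyl j q) = mid j q (x.1, min x.2 (σ t))) ∧
      (∀ w, Φ (w, 0) = w) ∧ ∀ w, Φ (w, 1) = ⟨inl j q (d w), hl _⟩ := by
  obtain ⟨d, hd₁, hd₂, -⟩ := exists_desc_open hWo (R := Z) ⟨fun z => z, by fun_prop⟩
    ⟨fun x => j x.1.1, by fun_prop⟩ (elimEmpty fun c => hr c.1 c.2) (fun _ _ _ => rfl)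
    (fun l _ h => (hr _ h).elim)
  obtain ⟨Φ, hΦ₁, hΦ₂, -⟩ := exists_homotopy_desc_open hWo (R := W)
    ⟨fun p => ⟨inl j q p.1.1, hl _⟩, by fun_prop⟩
    ⟨fun p => ⟨mid j q (p.1.1.1, min p.1.1.2 (σ p.2)),
      (hm _).2 (lt_of_le_of_lt (min_le_left _ _) ((hm _).1 p.1.2))⟩, by fun_prop⟩
    (elimEmpty fun c => hr c.1.1 c.1.2)
    (fun l _ _ t => Subtype.ext (by simpa using mid_zero l)) (fun l _ h => (hr _ h).elim)
  refine ⟨d, Φ, hd₁, hd₂, fun z hz t => congrArg Subtype.val (hΦ₁ z hz t),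
    fun z hz t => congrArg Subtype.val (hΦ₂ z hz t), ?_, ?_⟩
  · rintro ⟨m, h⟩
    induction m using DoubleCyl.induction with
    | h₁ z => rw [hΦ₁]; rfl
    | h₂ x => rw [hΦ₂]; exact Subtype.ext (by simp [min_eq_left le_one'])
    | h₃ c => exact (hr c h).elim
  · rintro ⟨m, h⟩
    induction m using DoubleCyl.induction with
    | h₁ z => rw [hΦ₁]; exact Subtype.ext (by simp [hd₁])
    | h₂ x => rw [hΦ₂]; exact Subtype.ext (by simp [hd₂, mid_zero])
    | h₃ c => exact (hr c h).elim

theorem exists_right_retraction (hWo : IsOpen W) (hl : ∀ z, inl j q z ∉ W)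
    (hm : ∀ x, mid j q x ∈ W ↔ 0 < x.2) (hr : ∀ c, inr j q c ∈ W) :
    ∃ (d : C(W, C)) (Φ : C(W × I, W)), (∀ c hc, d ⟨inr j q c, hc⟩ = c) ∧
      (∀ x hx, d ⟨mid j q x, hx⟩ = q x.1) ∧
      (∀ c hc t, (Φ (⟨inr j q c, hc⟩, t) : DoubleCyl j q) = inr j q c) ∧
      (∀ x hx t, (Φ (⟨mid j q x, hx⟩, t) : DoubleCyl j q) = mid j q (x.1, max x.2 t)) ∧
      (∀ w, Φ (w, 0) = w) ∧ ∀ w, Φ (w, 1) = ⟨inr j q (d w), hr _⟩ := by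
  obtain ⟨d, -, hd₂, hd₁⟩ := exists_desc_open hWo (R := C) (elimEmpty fun c => hl c.1 c.2)
    ⟨fun x => q x.1.1, by fun_prop⟩ ⟨fun z => z, by fun_prop⟩ (fun l _ h => (hl _ h).elim)
    (fun _ _ _ => rfl)
  obtain ⟨Φ, -, hΦ₂, hΦ₁⟩ := exists_homotopy_desc_open hWo (R := W)
    (elimEmpty fun c => hl c.1.1 c.1.2)
    ⟨fun p => ⟨mid j q (p.1.1.1, max p.1.1.2 p.2),
      (hm _).2 (lt_of_lt_of_le ((hm _).1 p.1.2) (le_max_left _ _))⟩, by fun_prop⟩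
    ⟨fun p => ⟨inr j q p.1.1, hr _⟩, by fun_prop⟩
    (fun l _ h => (hl _ h).elim)
    (fun l _ _ t => Subtype.ext (by simpa [max_eq_left le_one'] using mid_one l))
  refine ⟨d, Φ, hd₁, hd₂, fun z hz t => congrArg Subtype.val (hΦ₁ z hz t),
    fun z hz t => congrArg Subtype.val (hΦ₂ z hz t), ?_, ?_⟩
  · rintro ⟨m, h⟩
    induction m using DoubleCyl.induction with
    | h₁ z => exact (hl z h).elim
    | h₂ x => rw [hΦ₂]; exact Subtype.ext (by simp)
    | h₃ c => rw [hΦ₁]; rfl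
  · rintro ⟨m, h⟩
    induction m using DoubleCyl.induction with
    | h₁ z => exact (hl z h).elim
    | h₂ x => rw [hΦ₂]; exact Subtype.ext (by simp [hd₂, max_eq_right le_one', mid_one])
    | h₃ c => rw [hΦ₁]; exact Subtype.ext (by simp [hd₁])

/-- The midpoint of the unit interval. -/
noncomputable def midpt : I := ⟨1 / 2, by norm_num, by norm_num⟩

theorem midpt_pos : 0 < midpt := Subtype.mk_lt_mk.2 (by norm_num)

theorem midpt_lt_one : midpt < 1 := Subtype.mk_lt_mk.2 (by norm_num)

/-- A deformation of the unit interval to its midpoint. -/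
noncomputable def toMid : C(I × I, I) :=
  ⟨fun p => max (min p.1 (max midpt (σ p.2))) (min midpt p.2), by fun_prop⟩

theorem toMid_zero (u : I) : toMid (u, 0) = u := by
  simp [toMid, max_eq_right le_one', min_eq_left le_one']

theorem toMid_one (u : I) : toMid (u, 1) = midpt := by
  simp only [toMid, ContinuousMap.coe_mk, symm_one, min_eq_left le_one', max_eq_left nonneg']
  exact max_eq_right (min_le_right _ _)

theorem toMid_pos {u : I} (hu : 0 < u) (t : I) : 0 < toMid (u, t) :=
  lt_max_of_lt_left (lt_min hu (lt_max_of_lt_left midpt_pos))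

theorem toMid_lt_one {u : I} (hu : u < 1) (t : I) : toMid (u, t) < 1 :=
  max_lt (min_lt_of_left_lt hu) (min_lt_of_left_lt midpt_lt_one)

theorem exists_mid_retraction (hWo : IsOpen W) (hl : ∀ z, inl j q z ∉ W)
    (hm : ∀ x, mid j q x ∈ W ↔ x.2 < 1 ∧ 0 < x.2) (hr : ∀ c, inr j q c ∉ W) :
    ∃ (d : C(W, L)) (Φ : C(W × I, W)), (∀ x hx, d ⟨mid j q x, hx⟩ = x.1) ∧
      (∀ x hx t, (Φ (⟨mid j q x, hx⟩, t) : DoubleCyl j q) = mid j q (x.1, toMid (x.2, t))) ∧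
      (∀ w, Φ (w, 0) = w) ∧
      ∀ w, Φ (w, 1) = ⟨mid j q (d w, midpt), (hm _).2 ⟨midpt_lt_one, midpt_pos⟩⟩ := by
  obtain ⟨d, -, hd, -⟩ := exists_desc_open hWo (R := L) (elimEmpty fun c => hl c.1 c.2)
    ⟨fun x => x.1.1, by fun_prop⟩ (elimEmpty fun c => hr c.1 c.2) (fun l _ h => (hl _ h).elim)
    (fun l _ h => (hr _ h).elim)
  obtain ⟨Φ, -, hΦ, -⟩ := exists_homotopy_desc_open hWo (R := W)
    (elimEmpty fun c => hl c.1.1 c.1.2)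
    ⟨fun p => ⟨mid j q (p.1.1.1, toMid (p.1.1.2, p.2)), (hm _).2
      ⟨toMid_lt_one ((hm _).1 p.1.2).1 _, toMid_pos ((hm _).1 p.1.2).2 _⟩⟩, by fun_prop⟩
    (elimEmpty fun c => hr c.1.1 c.1.2)
    (fun l _ h => (hl _ h).elim) (fun l _ h => (hr _ h).elim)
  refine ⟨d, Φ, hd, fun z hz t => congrArg Subtype.val (hΦ z hz t), ?_, ?_⟩
  · rintro ⟨m, h⟩
    induction m using DoubleCyl.induction with
    | h₁ z => exact (hl z h).elim
    | h₂ x => rw [hΦ]; exact Subtype.ext (by simp [toMid_zero])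
    | h₃ c => exact (hr c h).elim
  · rintro ⟨m, h⟩
    induction m using DoubleCyl.induction with
    | h₁ z => exact (hl z h).elim
    | h₂ x => rw [hΦ]; exact Subtype.ext (by simp [hd, toMid_one])
    | h₃ c => exact (hr c h).elim

end Retracts

variable {L Z C L' Z' C' : Type*} [TopologicalSpace L] [TopologicalSpace Z] [TopologicalSpace C]
  [TopologicalSpace L'] [TopologicalSpace Z'] [TopologicalSpace C']
  {j : C(L, Z)} {q : C(L, C)} {j' : C(L', Z')} {q' : C(L', C')}
  {fZ : C(Z, Z')} {fL : C(L, L')} {fC : C(C, C')}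

/-- A levelwise weak equivalence induces a weak equivalence of double mapping cylinders. -/
theorem hasCubeLifts_map (hj : ∀ l, fZ (j l) = j' (fL l)) (hq : ∀ l, fC (q l) = q' (fL l))
    (hZ : HasCubeLifts fZ) (hL : HasCubeLifts fL) (hC : HasCubeLifts fC)
    (F : C(DoubleCyl j q, DoubleCyl j' q')) (hF₁ : ∀ z, F (inl j q z) = inl j' q' (fZ z))
    (hF₂ : ∀ x, F (mid j q x) = mid j' q' (fL x.1, x.2))
    (hF₃ : ∀ c, F (inr j q c) = inr j' q' (fC c)) : HasCubeLifts F := by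
  obtain ⟨τ, hτ₁, hτ₂, hτ₃⟩ := exists_height j' q'
  have hUo : IsOpen (τ ⁻¹' {t | t < 1}) := (isOpen_gt' 1).preimage τ.continuous
  have hVo : IsOpen (τ ⁻¹' {t | 0 < t}) := (isOpen_lt' 0).preimage τ.continuous
  refine hasCubeLifts_of_open_cover hUo hVo ?_ ?_ ?_ ?_
  · ext m
    simp only [Set.mem_union, Set.mem_preimage, Set.mem_ofPred_eq, Set.mem_univ, iff_true]
    rcases eq_or_ne (τ m) 0 with h | h
    · exact Or.inl (h ▸ zero_lt_one)
    · exact Or.inr (unitInterval.pos_iff_ne_zero.2 h)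
  · have hr : ∀ c, inr j q c ∉ F ⁻¹' (τ ⁻¹' {t | t < 1}) := by simp [hF₃, hτ₃]
    obtain ⟨d, Φ, hd₁, hd₂, hΦ₁, hΦ₂, h0, h1⟩ := exists_left_retraction
      (hUo.preimage F.continuous) (by simp [hF₁, hτ₁]) (by simp [hF₂, hτ₂]) hr
    obtain ⟨d', Φ', hd₁', hd₂', hΦ₁', hΦ₂', h0', h1'⟩ := exists_left_retraction hUo
      (by simp [hτ₁]) (by simp [hτ₂]) (by simp [hτ₃])
    refine hZ.of_homotopy_retract d d' ⟨fun z => ⟨inl j q z, by simp [hF₁, hτ₁]⟩, by fun_prop⟩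
      ⟨fun z => ⟨inl j' q' z, by simp [hτ₁]⟩, by fun_prop⟩ ?_ (fun z => Subtype.ext (hF₁ z))
      Φ Φ' h0 h0' h1 h1' ?_
    · rintro ⟨m, h⟩
      induction m using DoubleCyl.induction with
      | h₁ z => rw [hd₁, restrictPreimage_mk (hF₁ z) h, hd₁']
      | h₂ x => rw [hd₂, restrictPreimage_mk (hF₂ x) h, hd₂', hj]
      | h₃ c => exact (hr c h).elim
    · rintro ⟨m, h⟩ t
      refine Subtype.ext ?_
      induction m using DoubleCyl.induction with
      | h₁ z =>
        rw [restrictPreimage_mk (hF₁ z) h, hΦ₁']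
        exact (congrArg F (hΦ₁ z h t)).trans (hF₁ z)
      | h₂ x =>
        rw [restrictPreimage_mk (hF₂ x) h, hΦ₂']
        exact (congrArg F (hΦ₂ x h t)).trans (hF₂ _)
      | h₃ c => exact (hr c h).elim
  · have hl : ∀ z, inl j q z ∉ F ⁻¹' (τ ⁻¹' {t | 0 < t}) := by simp [hF₁, hτ₁]
    obtain ⟨d, Φ, hd₁, hd₂, hΦ₁, hΦ₂, h0, h1⟩ := exists_right_retraction
      (hVo.preimage F.continuous) hl (by simp [hF₂, hτ₂]) (by simp [hF₃, hτ₃])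
    obtain ⟨d', Φ', hd₁', hd₂', hΦ₁', hΦ₂', h0', h1'⟩ := exists_right_retraction hVo
      (by simp [hτ₁]) (by simp [hτ₂]) (by simp [hτ₃])
    refine hC.of_homotopy_retract d d' ⟨fun z => ⟨inr j q z, by simp [hF₃, hτ₃]⟩, by fun_prop⟩
      ⟨fun z => ⟨inr j' q' z, by simp [hτ₃]⟩, by fun_prop⟩ ?_ (fun z => Subtype.ext (hF₃ z))
      Φ Φ' h0 h0' h1 h1' ?_
    · rintro ⟨m, h⟩
      induction m using DoubleCyl.induction with
      | h₁ z => exact (hl z h).elim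
      | h₂ x => rw [hd₂, restrictPreimage_mk (hF₂ x) h, hd₂', hq]
      | h₃ c => rw [hd₁, restrictPreimage_mk (hF₃ c) h, hd₁']
    · rintro ⟨m, h⟩ t
      refine Subtype.ext ?_
      induction m using DoubleCyl.induction with
      | h₁ z => exact (hl z h).elim
      | h₂ x =>
        rw [restrictPreimage_mk (hF₂ x) h, hΦ₂']
        exact (congrArg F (hΦ₂ x h t)).trans (hF₂ _)
      | h₃ c =>
        rw [restrictPreimage_mk (hF₃ c) h, hΦ₁']
        exact (congrArg F (hΦ₁ c h t)).trans (hF₃ c)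
  · have hl : ∀ z, inl j q z ∉ F ⁻¹' (τ ⁻¹' {t | t < 1} ∩ τ ⁻¹' {t | 0 < t}) := by
      simp [hF₁, hτ₁]
    have hr : ∀ c, inr j q c ∉ F ⁻¹' (τ ⁻¹' {t | t < 1} ∩ τ ⁻¹' {t | 0 < t}) := by
      simp [hF₃, hτ₃]
    obtain ⟨d, Φ, hd, hΦ, h0, h1⟩ := exists_mid_retraction
      ((hUo.inter hVo).preimage F.continuous) hl (by simp [hF₂, hτ₂]) hr
    obtain ⟨d', Φ', hd', hΦ', h0', h1'⟩ := exists_mid_retraction (hUo.inter hVo)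
      (by simp [hτ₁]) (by simp [hτ₂]) (by simp [hτ₃])
    refine hL.of_homotopy_retract d d'
      ⟨fun l => ⟨mid j q (l, midpt), by simp [hF₂, hτ₂, midpt_pos, midpt_lt_one]⟩, by fun_prop⟩
      ⟨fun l => ⟨mid j' q' (l, midpt), by simp [hτ₂, midpt_pos, midpt_lt_one]⟩, by fun_prop⟩ ?_
      (fun l => Subtype.ext (hF₂ (l, midpt))) Φ Φ' h0 h0' h1 h1' ?_
    · rintro ⟨m, h⟩
      induction m using DoubleCyl.induction with
      | h₁ z => exact (hl z h).elim
      | h₂ x => rw [hd, restrictPreimage_mk (hF₂ x) h, hd']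
      | h₃ c => exact (hr c h).elim
    · rintro ⟨m, h⟩ t
      refine Subtype.ext ?_
      induction m using DoubleCyl.induction with
      | h₁ z => exact (hl z h).elim
      | h₂ x =>
        rw [restrictPreimage_mk (hF₂ x) h, hΦ']
        exact (congrArg F (hΦ x h t)).trans (hF₂ _)
      | h₃ c => exact (hr c h).elim

end DoubleCyl

section Gluing

variable {L Z C Q R : Type*} [TopologicalSpace L] [TopologicalSpace Z] [TopologicalSpace C]
  [TopologicalSpace Q] [TopologicalSpace R]

/-- `Q` is the space obtained by gluing `Z` and `C` along `Z ← L → C`. -/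
structure IsGluing (j : C(L, Z)) (q : C(L, C)) (iZ : C(Z, Q)) (iC : C(C, Q)) : Prop where
  comm : ∀ l, iZ (j l) = iC (q l)
  isQuotientMap : IsQuotientMap (Sum.elim iZ iC)
  eqvGen : ∀ a b, Sum.elim iZ iC a = Sum.elim iZ iC b →
    Relation.EqvGen (fun a b => ∃ l, a = Sum.inl (j l) ∧ b = Sum.inr (q l)) a b

namespace IsGluing

variable {j : C(L, Z)} {q : C(L, C)} {iZ : C(Z, Q)} {iC : C(C, Q)}

theorem induction (h : IsGluing j q iZ iC) {p : Q → Prop} (h₁ : ∀ z, p (iZ z))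
    (h₂ : ∀ c, p (iC c)) (x : Q) : p x := by
  obtain ⟨z | c, rfl⟩ := h.isQuotientMap.surjective x
  exacts [h₁ z, h₂ c]

theorem exists_desc (h : IsGluing j q iZ iC) (f : C(Z, R)) (k : C(C, R))
    (hfk : ∀ l, f (j l) = k (q l)) :
    ∃ d : C(Q, R), (∀ z, d (iZ z) = f z) ∧ ∀ c, d (iC c) = k c := by
  obtain ⟨d, hd⟩ := exists_desc_of_isQuotientMap h.isQuotientMap
    (by rintro _ _ ⟨l, rfl, rfl⟩; exact h.comm l) h.eqvGen isOpen_univ (R := R)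
    ⟨fun s => Sum.elim f k s.1, by fun_prop⟩ (by rintro _ _ ⟨l, rfl, rfl⟩ _ _; exact hfk l)
  exact ⟨d.comp ⟨fun x => ⟨x, trivial⟩, by fun_prop⟩, fun z => hd (Sum.inl z) trivial,
    fun c => hd (Sum.inr c) trivial⟩

theorem exists_homotopy_desc (h : IsGluing j q iZ iC) (f : C(Z × I, R)) (k : C(C × I, R))
    (hfk : ∀ l t, f (j l, t) = k (q l, t)) :
    ∃ d : C(Q × I, R), (∀ z t, d (iZ z, t) = f (z, t)) ∧ ∀ c t, d (iC c, t) = k (c, t) := by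
  obtain ⟨d, hd₁, hd₂⟩ := h.exists_desc f.curry k.curry fun l => ContinuousMap.ext (hfk l)
  exact ⟨d.uncurry, fun z t => DFunLike.congr_fun (hd₁ z) t,
    fun z t => DFunLike.congr_fun (hd₂ z) t⟩

/-- When `j` is an h-cofibration, the double mapping cylinder is equivalent to the gluing. -/
theorem exists_cylinder_equiv (h : IsGluing j q iZ iC) (hj : IsHCofibration j) :
    ∃ (e : C(DoubleCyl j q, Q)) (s : C(Q, DoubleCyl j q)) (φ : C(Q × I, Q)),
      (∀ z, e (DoubleCyl.inl j q z) = iZ z) ∧ (∀ x, e (DoubleCyl.mid j q x) = iC (q x.1)) ∧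
      (∀ c, e (DoubleCyl.inr j q c) = iC c) ∧ (∀ x, φ (x, 0) = x) ∧ (∀ x, φ (x, 1) = e (s x)) ∧
      HasCubeLifts e := by
  obtain ⟨hj, r, hr, hr'⟩ := hj
  obtain ⟨e, he₁, he₂, he₃⟩ := DoubleCyl.exists_desc (j := j) (q := q) iZ
    ⟨fun x => iC (q x.1), by fun_prop⟩ iC (fun l => (h.comm l).symm) (fun _ => rfl)
  let inv := hj.isEmbedding.toHomeomorph.symm
  have hinv : ∀ x : Set.range j, j (inv x) = x := fun x =>
    congrArg Subtype.val (hj.isEmbedding.toHomeomorph.apply_symm_apply x)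
  have hinv' : ∀ l h, inv ⟨j l, h⟩ = l := fun l h => hj.injective (hinv _)
  obtain ⟨ψZ, hψ₀, hψ₁⟩ := exists_glue (K := Z × I) (Z := DoubleCyl j q) (P := {p | (r p).2 = 0})
    (Q := {p | (r p).1 ∈ Set.range j}) (isClosed_singleton.preimage (by fun_prop : Continuous
      fun p => (r p).2)) (hj.isClosed_range.preimage (by fun_prop : Continuous fun p => (r p).1)) hr
    ⟨fun p => DoubleCyl.inl j q (r p).1, by fun_prop⟩
    ⟨fun p => DoubleCyl.mid j q (inv ⟨(r p).1, p.2⟩, (r p).2), by fun_prop⟩ (by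
      intro p hp hp'
      have hp₀ : (r p).2 = 0 := hp
      simp [hp₀, DoubleCyl.mid_zero, hinv])
  have hψj : ∀ l t, ψZ (j l, t) = DoubleCyl.mid j q (l, t) := by
    intro l t
    have hjl := hr' (j l, t) (Or.inr ⟨l, rfl⟩)
    rw [hψ₁ (j l, t) (by rw [Set.mem_ofPred_eq, hjl]; exact ⟨l, rfl⟩)]
    simp [hjl, hinv']
  have heψ : ∀ p, e (ψZ p) = iZ (r p).1 := by
    intro p
    rcases hr p with hp | hp
    · rw [hψ₀ p hp]
      exact he₁ _
    · rw [hψ₁ p hp]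
      exact (he₂ _).trans ((h.comm _).symm.trans (congrArg iZ (hinv _)))
  obtain ⟨ψ, hψ₁', hψ₂, hψ₃⟩ := DoubleCyl.exists_homotopy_desc (j := j) (q := q) ψZ
    ⟨fun p => DoubleCyl.mid j q (p.1.1, max p.1.2 p.2), by fun_prop⟩
    ((DoubleCyl.inr j q).comp .fst) (by simp [hψj])
    (by simp [max_eq_left le_one', DoubleCyl.mid_one])
  obtain ⟨s, hs₁, hs₂⟩ := h.exists_desc (ψZ.comp ⟨fun z => (z, 1), by fun_prop⟩)
    (DoubleCyl.inr j q) (by simp [hψj, DoubleCyl.mid_one])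
  obtain ⟨φ, hφ₁, hφ₂⟩ := h.exists_homotopy_desc ⟨fun p => iZ (r p).1, by fun_prop⟩
    (iC.comp .fst) (fun l t => by simp [hr' (j l, t) (Or.inr ⟨l, rfl⟩), h.comm])
  have hφ0 : ∀ x, φ (x, 0) = x := h.induction
    (fun z => by rw [hφ₁, ContinuousMap.coe_mk, hr' _ (Or.inl rfl)]) (fun c => hφ₂ c 0)
  have hφ1 : ∀ x, φ (x, 1) = e (s x) := h.induction
    (fun z => by rw [hφ₁, hs₁]; exact (heψ _).symm) (fun c => by rw [hφ₂, hs₂, he₃]; rfl)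
  refine ⟨e, s, φ, he₁, he₂, he₃, hφ0, hφ1,
    hasCubeLifts_id.of_homotopy_retract (s.comp e) s (ContinuousMap.id _) e (fun _ => rfl)
      (fun _ => rfl) ψ φ ?_ hφ0 ?_ hφ1 ?_⟩
  · intro m
    induction m using DoubleCyl.induction with
    | h₁ z =>
      have hz := hr' (z, 0) (Or.inl rfl)
      rw [hψ₁', hψ₀ (z, 0) (by rw [Set.mem_ofPred_eq, hz])]
      simp [hz]
    | h₂ x => simp [hψ₂]
    | h₃ c => exact hψ₃ c 0
  · intro m
    induction m using DoubleCyl.induction with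
    | h₁ z => simp [hψ₁', he₁, hs₁]
    | h₂ x => simp [hψ₂, he₂, hs₂, max_eq_right le_one', DoubleCyl.mid_one]
    | h₃ c => simp [hψ₃, he₃, hs₂]
  · intro m t
    induction m using DoubleCyl.induction with
    | h₁ z => rw [hψ₁', heψ, he₁, hφ₁]; rfl
    | h₂ x => rw [hψ₂, he₂]; exact (he₂ _).trans (hφ₂ _ _).symm
    | h₃ c => rw [hψ₃, he₃, hφ₂]; exact he₃ _

variable {L' Z' C' Q' : Type*} [TopologicalSpace L'] [TopologicalSpace Z'] [TopologicalSpace C']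
  [TopologicalSpace Q'] {j' : C(L', Z')} {q' : C(L', C')} {iZ' : C(Z', Q')} {iC' : C(C', Q')}
  {fZ : C(Z, Z')} {fL : C(L, L')} {fC : C(C, C')}

/-- The gluing theorem for weak equivalences. -/
theorem hasCubeLifts (h : IsGluing j q iZ iC) (h' : IsGluing j' q' iZ' iC')
    (hjc : IsHCofibration j) (hjc' : IsHCofibration j')
    (hj : ∀ l, fZ (j l) = j' (fL l)) (hq : ∀ l, fC (q l) = q' (fL l))
    (hZ : HasCubeLifts fZ) (hL : HasCubeLifts fL) (hC : HasCubeLifts fC)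
    (G : C(Q, Q')) (hG₁ : ∀ z, G (iZ z) = iZ' (fZ z)) (hG₂ : ∀ c, G (iC c) = iC' (fC c)) :
    HasCubeLifts G := by
  obtain ⟨e, s, φ, he₁, he₂, he₃, hφ0, hφ1, -⟩ := h.exists_cylinder_equiv hjc
  obtain ⟨e', -, -, he₁', he₂', he₃', -, -, he'⟩ := h'.exists_cylinder_equiv hjc'
  obtain ⟨F, hF₁, hF₂, hF₃⟩ := DoubleCyl.exists_desc (j := j) (q := q)
    ((DoubleCyl.inl j' q').comp fZ)
    ((DoubleCyl.mid j' q').comp ⟨fun x => (fL x.1, x.2), by fun_prop⟩)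
    ((DoubleCyl.inr j' q').comp fC) (by simp [hj, DoubleCyl.mid_zero])
    (by simp [hq, DoubleCyl.mid_one])
  have hGe : G.comp e = e'.comp F := by
    ext m
    induction m using DoubleCyl.induction with
    | h₁ z => simp [he₁, hG₁, hF₁, he₁']
    | h₂ x => simp [he₂, hG₂, hF₂, he₂', hq]
    | h₃ c => simp [he₃, hG₂, hF₃, he₃']
  refine HasCubeLifts.of_comp (e := e) ?_ s φ hφ0 hφ1
  rw [hGe]
  exact he'.comp (DoubleCyl.hasCubeLifts_map hj hq hZ hL hC F hF₁ hF₂ hF₃)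

end IsGluing

end Gluing

section PushoutProduct

variable {A B X Y : Type*} [TopologicalSpace A] [TopologicalSpace B] [TopologicalSpace X]
  [TopologicalSpace Y]

theorem IsHCofibration.exists_deformation {i : C(A, X)} (hi : IsHCofibration i) :
    ∃ (H : C(X × I, X)) (φ : C(X, I)), (∀ x, H (x, 0) = x) ∧ (∀ a t, H (i a, t) = i a) ∧
      (∀ a, φ (i a) = 0) ∧ ∀ x t, φ x ≤ t → φ x < 1 → H (x, t) ∈ Set.range i := by
  obtain ⟨hi, r, hr, hr'⟩ := hi
  let k : X → I → ℝ := fun x t => t - (r (x, t)).2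
  have hk : Continuous fun p : X × I => k p.1 p.2 :=
    (by fun_prop : Continuous fun p : X × I => ((p.2 : ℝ) - (r p).2))
  let φ : X → ℝ := fun x => sSup (k x '' Set.univ)
  have hφc : Continuous φ := isCompact_univ.continuous_sSup hk
  have hbdd : ∀ x, BddAbove (k x '' Set.univ) := fun x =>
    isCompact_univ.bddAbove_image (by fun_prop)
  have hle : ∀ x t, k x t ≤ φ x := fun x t => le_csSup (hbdd x) ⟨t, trivial, rfl⟩
  have hφ0 : ∀ x, 0 ≤ φ x := fun x => by simpa [k, hr' (x, 0) (Or.inl rfl)] using hle x 0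
  have hφ1 : ∀ x, φ x ≤ 1 := fun x => csSup_le ⟨_, 0, trivial, rfl⟩ (by
    rintro _ ⟨t, -, rfl⟩
    have := t.2.2
    have := (r (x, t)).2.2.1
    simp only [k]
    linarith)
  have hmem : ∀ x (t : I), φ x < t → (r (x, t)).1 ∈ Set.range i := by
    intro x t hxt
    refine (hr (x, t)).resolve_left fun h => ?_
    have := hle x t
    simp only [k, h, Set.Icc.coe_zero, sub_zero] at this
    linarith
  refine ⟨⟨fun p => (r p).1, by fun_prop⟩, ⟨fun x => ⟨φ x, hφ0 x, hφ1 x⟩, by fun_prop⟩,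
    fun x => by simp [hr' (x, 0) (Or.inl rfl)], fun a t => by simp [hr' (i a, t) (Or.inr ⟨a, rfl⟩)],
    fun a => Subtype.ext (le_antisymm (csSup_le ⟨_, 0, trivial, rfl⟩ ?_) (hφ0 _)), ?_⟩
  · rintro _ ⟨t, -, rfl⟩
    simp [k, hr' (i a, t) (Or.inr ⟨a, rfl⟩)]
  · intro x t hxt hx1
    have hcl : IsClosed {s : I | (r (x, s)).1 ∈ Set.range i} :=
      hi.isClosed_range.preimage (by fun_prop)
    have hsub : Set.Ioi (⟨φ x, hφ0 x, hφ1 x⟩ : I) ⊆ {s | (r (x, s)).1 ∈ Set.range i} :=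
      fun s hs => hmem x s hs
    have hne : (Set.Ioi (⟨φ x, hφ0 x, hφ1 x⟩ : I)).Nonempty := ⟨1, hx1⟩
    exact closure_minimal hsub hcl ((closure_Ioi' hne).symm.subset hxt)

theorem IsHCofibration.prodMap_id {i : C(A, X)} (hi : IsHCofibration i) :
    IsHCofibration (i.prodMap (ContinuousMap.id B)) := by
  obtain ⟨hi, r, hr, hr'⟩ := hi
  refine ⟨hi.prodMap .id, ⟨fun p => (((r (p.1.1, p.2)).1, p.1.2), (r (p.1.1, p.2)).2),
    by fun_prop⟩, fun z => ?_, fun z hz => ?_⟩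
  · refine (hr (z.1.1, z.2)).imp_right ?_
    rintro ⟨a, ha⟩
    exact ⟨(a, z.1.2), Prod.ext ha rfl⟩
  · have := hr' (z.1.1, z.2) (hz.imp_right (by rintro ⟨a, ha⟩; exact ⟨a.1, congrArg Prod.fst ha⟩))
    simp [this]

/-- The subspace `X × i_Y(B) ∪ i_X(A) × Y` of `X × Y`. -/
def wedgeSet (i : C(A, X)) (k : C(B, Y)) : Set (X × Y) :=
  {p | p.1 ∈ Set.range i ∨ p.2 ∈ Set.range k}

/-- The inclusion of `X × i_Y(B) ∪ i_X(A) × Y` into `X × Y`. -/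
def wedgeIncl (i : C(A, X)) (k : C(B, Y)) : C(wedgeSet i k, X × Y) := ⟨Subtype.val, by fun_prop⟩

theorem isHCofibration_wedgeIncl {i : C(A, X)} {k : C(B, Y)} (hi : IsHCofibration i)
    (hk : IsHCofibration k) : IsHCofibration (wedgeIncl i k) := by
  have hcl : IsClosed (wedgeSet i k) :=
    (hi.1.isClosed_range.preimage continuous_fst).union
      (hk.1.isClosed_range.preimage continuous_snd)
  obtain ⟨H, φ, h0, hA, hφA, hm⟩ := hi.exists_deformation
  obtain ⟨H', φ', h0', hA', hφA', hm'⟩ := hk.exists_deformation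
  have hrange : Set.range (wedgeIncl i k) = wedgeSet i k := Subtype.range_val
  refine ⟨hcl.isClosedEmbedding_subtypeVal, ⟨fun z =>
    ((H (z.1.1, min z.2 (φ' z.1.2)), H' (z.1.2, min z.2 (φ z.1.1))),
      Set.projIcc 0 1 zero_le_one ((z.2 : ℝ) - min (φ z.1.1 : ℝ) (φ' z.1.2))), ?_⟩, ?_, ?_⟩
  · have : Continuous (Set.projIcc (0 : ℝ) 1 zero_le_one) := continuous_projIcc
    fun_prop
  · rintro ⟨⟨x, y⟩, t⟩
    rw [hrange]
    rcases le_or_gt t (min (φ x) (φ' y)) with h | h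
    · refine Or.inl (Set.projIcc_of_le_left zero_le_one ?_)
      have h₁ : (t : ℝ) ≤ φ x := h.trans (min_le_left _ _)
      have h₂ : (t : ℝ) ≤ φ' y := h.trans (min_le_right _ _)
      simpa using ⟨h₁, h₂⟩
    · right
      rcases le_total (φ x) (φ' y) with hxy | hxy
      · rw [min_eq_left hxy] at h
        exact Or.inl (hm _ _ (le_min h.le hxy) (h.trans_le le_one'))
      · rw [min_eq_right hxy] at h
        exact Or.inr (hm' _ _ (le_min h.le hxy) (h.trans_le le_one'))
  · rintro ⟨⟨x, y⟩, t⟩ h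
    rw [hrange] at h
    have hnn : ∀ u : I, min (0 : I) u = 0 := fun u => min_eq_left nonneg'
    rcases h with rfl | ⟨a, rfl⟩ | ⟨b, rfl⟩
    · simp only [ContinuousMap.coe_mk, hnn, h0, h0']
      refine Prod.ext rfl (Set.projIcc_of_le_left zero_le_one ?_)
      have h₁ : (0 : ℝ) ≤ φ x := (φ x).2.1
      have h₂ : (0 : ℝ) ≤ φ' y := (φ' y).2.1
      simpa using ⟨h₁, h₂⟩
    · have h₂ : min (0 : ℝ) (φ' y) = 0 := min_eq_left (φ' y).2.1
      simp [hφA, hA, h0', h₂]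
    · have h₂ : min (φ x : ℝ) 0 = 0 := min_eq_right (φ x).2.1
      simp [hφA', hA', h0, h₂]

theorem isGluing_wedge {i : C(A, X)} {k : C(B, Y)} (hi : IsHCofibration i)
    (hk : IsHCofibration k) :
    IsGluing (i.prodMap (ContinuousMap.id B)) ((ContinuousMap.id A).prodMap k)
      (⟨fun p => ⟨(p.1, k p.2), Or.inr ⟨p.2, rfl⟩⟩, by fun_prop⟩ : C(X × B, wedgeSet i k))
      (⟨fun p => ⟨(i p.1, p.2), Or.inl ⟨p.1, rfl⟩⟩, by fun_prop⟩ : C(A × Y, wedgeSet i k)) where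
  comm _ := rfl
  isQuotientMap := by
    refine IsClosedMap.isQuotientMap ?_ (by fun_prop) ?_
    · refine IsClosedMap.sumElim ?_ ?_
      · refine (IsClosedEmbedding.of_comp .subtypeVal ?_).isClosedMap
        exact IsClosedEmbedding.id.prodMap hk.1
      · refine (IsClosedEmbedding.of_comp .subtypeVal ?_).isClosedMap
        exact hi.1.prodMap .id
    · rintro ⟨⟨x, y⟩, ⟨a, ha⟩ | ⟨b, hb⟩⟩
      · exact ⟨Sum.inr (a, y), Subtype.ext (Prod.ext ha rfl)⟩
      · exact ⟨Sum.inl (x, b), Subtype.ext (Prod.ext rfl hb)⟩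
  eqvGen := by
    rintro (⟨x, b⟩ | ⟨a, y⟩) (⟨x', b'⟩ | ⟨a', y'⟩) h
    · obtain ⟨h₁, h₂⟩ := Prod.ext_iff.1 (congrArg Subtype.val h)
      obtain rfl : x = x' := h₁
      obtain rfl : b = b' := hk.1.injective h₂
      exact .refl _
    · obtain ⟨h₁, h₂⟩ := Prod.ext_iff.1 (congrArg Subtype.val h)
      obtain rfl : x = i a' := h₁
      obtain rfl : k b = y' := h₂
      exact .rel _ _ ⟨(a', b), rfl, rfl⟩
    · obtain ⟨h₁, h₂⟩ := Prod.ext_iff.1 (congrArg Subtype.val h)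
      obtain rfl : i a = x' := h₁
      obtain rfl : y = k b' := h₂
      exact .symm _ _ (.rel _ _ ⟨(a, b'), rfl, rfl⟩)
    · obtain ⟨h₁, h₂⟩ := Prod.ext_iff.1 (congrArg Subtype.val h)
      obtain rfl : a = a' := hi.1.injective h₁
      obtain rfl : y = y' := h₂
      exact .refl _

theorem isGluing_extSmash {iX : C(A, X)} {pX : C(X, A)} (hX : ∀ a, pX (iX a) = a) {iY : C(B, Y)}
    {pY : C(Y, B)} (hY : ∀ b, pY (iY b) = b) :
    IsGluing (wedgeIncl iX iY) ((pX.prodMap pY).comp (wedgeIncl iX iY))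
      (⟨Quot.mk _, continuous_quot_mk⟩ : C(X × Y, ExtSmash iX pX iY pY))
      (extSmashSection iX pX iY pY) where
  comm := by
    rintro ⟨⟨x, y⟩, ⟨a, ha⟩ | ⟨b, hb⟩⟩
    · obtain rfl : iX a = x := ha
      refine Quot.sound (Or.inr ⟨a, y, rfl, ?_⟩)
      simp [wedgeIncl, hX]
    · obtain rfl : iY b = y := hb
      refine Quot.sound (Or.inl ⟨x, b, rfl, ?_⟩)
      simp [wedgeIncl, hY]
  isQuotientMap :=
    IsQuotientMap.of_comp continuous_inl (by fun_prop) (g := Sum.elim _ _) isQuotientMap_quot_mk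
  eqvGen := by
    let r : (X × Y) ⊕ (A × B) → (X × Y) ⊕ (A × B) → Prop := fun a b =>
      ∃ l, a = Sum.inl (wedgeIncl iX iY l) ∧
        b = Sum.inr (((pX.prodMap pY).comp (wedgeIncl iX iY)) l)
    have hwedge : ∀ z ∈ wedgeSet iX iY,
        Relation.EqvGen r (Sum.inl z) (Sum.inr (pX z.1, pY z.2)) :=
      fun z hz => .rel _ _ ⟨⟨z, hz⟩, rfl, rfl⟩
    have hsmash : ∀ z w, Relation.EqvGen (SmashRel iX pX iY pY) z w →
        Relation.EqvGen r (Sum.inl z) (Sum.inl w) := by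
      intro z w h
      induction h with
      | rel z w h =>
        rcases h with ⟨x, b, rfl, rfl⟩ | ⟨a, y, rfl, rfl⟩
        · refine .trans _ _ _ (hwedge _ (Or.inr ⟨b, rfl⟩)) (.symm _ _ ?_)
          simpa [hX] using hwedge (iX (pX x), iY b) (Or.inr ⟨b, rfl⟩)
        · refine .trans _ _ _ (hwedge _ (Or.inl ⟨a, rfl⟩)) (.symm _ _ ?_)
          simpa [hY] using hwedge (iX a, iY (pY y)) (Or.inl ⟨a, rfl⟩)
      | refl z => exact .refl _
      | symm z w _ ih => exact .symm _ _ ih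
      | trans z w v _ _ ih ih' => exact .trans _ _ _ ih ih'
    have hsec : ∀ c : A × B, Relation.EqvGen r (Sum.inl (iX c.1, iY c.2)) (Sum.inr c) :=
      fun c => by simpa [hX, hY] using hwedge (iX c.1, iY c.2) (Or.inl ⟨c.1, rfl⟩)
    rintro (z | c) (w | c') h
    · exact hsmash _ _ (Quot.eqvGen_exact h)
    · exact .trans _ _ _ (hsmash _ _ (Quot.eqvGen_exact h)) (hsec c')
    · exact .trans _ _ _ (.symm _ _ (hsec c)) (hsmash _ _ (Quot.eqvGen_exact h))
    · exact .trans _ _ _ (.symm _ _ (hsec c))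
        (.trans _ _ _ (hsmash _ _ (Quot.eqvGen_exact h)) (hsec c'))

end PushoutProduct

/-- If `X` is a retractive space over `A` with h-cofibrant section, and `g : Y → Y'` is a weak
equivalence of retractive spaces over `B` with h-cofibrant sections, then
`id_X ⊼ g : X ⊼ Y → X ⊼ Y'` is a weak equivalence. -/
theorem isWeakHomotopyEquiv_extSmashMap_id
    {A B X Y Y' : Type*} [TopologicalSpace A] [TopologicalSpace B]
    [TopologicalSpace X] [TopologicalSpace Y] [TopologicalSpace Y']
    (iX : C(A, X)) (pX : C(X, A)) (hXr : ∀ a, pX (iX a) = a)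
    (iY : C(B, Y)) (pY : C(Y, B)) (hYr : ∀ b, pY (iY b) = b)
    (iY' : C(B, Y')) (pY' : C(Y', B)) (hY'r : ∀ b, pY' (iY' b) = b)
    (hXi : IsHCofibration iX) (hYi : IsHCofibration iY) (hY'i : IsHCofibration iY')
    (g : C(Y, Y')) (hgi : ∀ b, g (iY b) = iY' b) (hgp : ∀ y, pY' (g y) = pY y)
    (hg : IsWeakHomotopyEquiv g) :
    IsWeakHomotopyEquiv
      (extSmashMap iX pX iY pY iX pX iY' pY' (ContinuousMap.id X) g
        (fun _ => rfl) (fun _ => rfl) hgi hgp) := by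
  have hgL := hg.hasCubeLifts
  let gL : C(wedgeSet iX iY, wedgeSet iX iY') :=
    ⟨fun p => ⟨(p.1.1, g p.1.2), p.2.imp_right (by rintro ⟨b, hb⟩; exact ⟨b, by rw [← hb, hgi]⟩)⟩,
      by fun_prop⟩
  have hwedge : HasCubeLifts gL :=
    (isGluing_wedge hXi hYi).hasCubeLifts (isGluing_wedge hXi hY'i) hXi.prodMap_id hXi.prodMap_id
      (fZ := ContinuousMap.id (X × B)) (fL := ContinuousMap.id (A × B))
      (fC := (ContinuousMap.id A).prodMap g) (fun _ => rfl) (fun l => Prod.ext rfl (hgi l.2))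
      hasCubeLifts_id hasCubeLifts_id hgL.id_prodMap gL
      (fun p => Subtype.ext (Prod.ext rfl (hgi p.2))) (fun _ => rfl)
  exact ((isGluing_extSmash hXr hYr).hasCubeLifts (isGluing_extSmash hXr hY'r)
    (isHCofibration_wedgeIncl hXi hYi) (isHCofibration_wedgeIncl hXi hY'i)
    (fZ := (ContinuousMap.id X).prodMap g) (fL := gL) (fC := ContinuousMap.id (A × B))
    (fun _ => rfl) (fun l => Prod.ext rfl (hgp l.1.2).symm) hgL.id_prodMap hwedge hasCubeLifts_id _
    (fun _ => rfl)
    (fun c => congrArg (fun y => Quot.mk _ (iX c.1, y)) (hgi c.2))).isWeakHomotopyEquiv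
end
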